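/- arXiv:1907.07085 — 3 statements merged into one kernel-verified Lean document; each statement's English description precedes it below -/
import Mathlib

section
/- Let Y_1,...,Y_n follow the Poisson GLARMA model without covariates and with MA order q=1, with true parameters β₀* ∈ ℝ and γ₁* ∈ Γ, where Γ is a compact subset of ℝ not containing 0, and assume the latent process (W_t*) is started with its stationary invariant distribution. Define the estimator γ̂₁ = Argmax_{γ₁ ∈ Γ} L(β₀*, γ₁), where L(β₀*, γ₁) = Σ_{t=1}^n (Y_t W_t(β₀*, γ₁) − exp(W_t(β₀*, γ₁))). Then γ̂₁ converges in probability to γ₁* as n tends to infinity. -/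
/-!
The latent recursion is not contracting in general, and no ergodic theorem is used. What makes the
estimator consistent is that a zero observation resets the model: if `Y (t - 1) = 0`, then
`W_t(γ) = β₀ - γ`, whatever happened before. Three consequences are used.

* Zero observations are recurrent (`noZero_tendsto`): on `{W ≤ M}` the next observation vanishes
  with conditional probability at least `exp (-exp M)`, and stationarity makes the laws of the
  `W_t` tight. They even have a positive frequency with high probability (`zero_freq`), by
  comparing their number with its compensator.
* Windows of `J` consecutive observations have a law independent of time, because `γ* ≠ 0` lets
  one recover `Y` from `W`. Hence, for large `J` and up to a small probability, the last `J`
  observations form one of finitely many patterns `v`, each containing a zero (`exists_patterns`).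
  For such a pattern both the candidate value `W_t(γ) = patternW β₀ γ v` and the true value
  `W_t = patternW β₀ γ* v` are fixed functions of `v`, and the former is continuous in `γ`.
* The process `W_t(γ*)`, which starts from `β₀`, merges with the true latent process at the first
  zero, hence almost surely after finitely many steps (`startErr_small`).

Accordingly each term of `L(γ) - L(γ*)` is bounded (`pointwise_bound`) by

* martingale increments `Y_t - exp W_t` restricted to each of the finitely many patterns, weighted by
  coefficients bounded uniformly over the compact set `Γ`; their sums are `o(n)` by Chebyshev's
  inequality, simultaneously for all `γ` (`patternInc_wlln`);
* minus `δ` whenever `Y (t - 1) = 0`, where `δ > 0` bounds from below, over `|γ - γ*| ≥ ε`, the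
  Kullback divergence between Poisson laws with log-parameters `β₀ - γ*` and `β₀ - γ`
  (`exists_separation`); at other times the divergence is merely nonnegative;
* at the bad times, where the window is not one of the patterns, a squared Pearson residual plus
  `δ`. The bound by the residual (`loglik_le_pearson`) is uniform in `γ`, and the conditional
  expectation of the residual is `1`, so Markov's inequality bounds the total by a small multiple
  of `n` (`bad_small`) without any moment assumption on `exp W_t`;
* a transient, before the merging of `W_t(γ*)` with `W_t`.

If the maximiser is at distance at least `ε` from `γ*`, the sum of these bounds is nonnegative
although the second contribution is at most `-δ c n`; so one of finitely many events of small
probability must occur (`far_small`).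
-/


open MeasureTheory ProbabilityTheory Filter Matrix
open scoped ENNReal

noncomputable section

/-- The candidate GLARMA latent process `W_t(β₀, γ₁)` (no covariates, `q = 1`),
defined with the convention `E_t(γ₁) = 0` for `t ≤ 0`, so that `W_1 = β₀` and, for `t ≥ 2`,
`W_t = β₀ + γ₁ (Y_{t-1} exp (-W_{t-1}) - 1)`.  Time is indexed by `ℕ`, observations start
at time `1` (the value at `0` is irrelevant and set to `β₀`). -/
def glarmaW (β₀ γ₁ : ℝ) (Y : ℕ → ℕ) : ℕ → ℝ
  | 0 => β₀
  | 1 => β₀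
  | t + 2 => β₀ + γ₁ * ((Y (t + 1) : ℝ) * Real.exp (-(glarmaW β₀ γ₁ Y (t + 1))) - 1)

/-- The GLARMA criterion `L(β₀, γ₁) = ∑_{t=1}^n (Y_t W_t(β₀, γ₁) - exp (W_t(β₀, γ₁)))`. -/
def glarmaL (β₀ γ₁ : ℝ) (Y : ℕ → ℕ) (n : ℕ) : ℝ :=
  ∑ t ∈ Finset.Icc 1 n, ((Y t : ℝ) * glarmaW β₀ γ₁ Y t - Real.exp (glarmaW β₀ γ₁ Y t))

/-- The Poisson probability mass function with (real) parameter `r`: `P(N = k)`. -/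
def poissonP (r : ℝ) (k : ℕ) : ℝ := Real.exp (-r) * r ^ k / (Nat.factorial k : ℝ)

/-- The σ-algebra `σ(Y_1, …, Y_t)` generated by the observations up to time `t`. -/
def sigmaY {Ω : Type*} (Y : ℕ → Ω → ℕ) (t : ℕ) : MeasurableSpace Ω :=
  ⨆ s ∈ Finset.Icc 1 t, MeasurableSpace.comap (Y s) ⊤

/-- The history σ-algebra `𝓕_t = σ(W_1, Y_1, …, Y_t)` of the GLARMA model (the initial
latent value `W_1` is included since the chain may be started at random, e.g. from its
stationary distribution). -/
def histSA {Ω : Type*} (W : ℕ → Ω → ℝ) (Y : ℕ → Ω → ℕ) (t : ℕ) : MeasurableSpace Ω :=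
  MeasurableSpace.comap (W 1) inferInstance ⊔
    ⨆ s ∈ Finset.Icc 1 t, MeasurableSpace.comap (Y s) ⊤

/-- The σ-algebra `σ(W_1, …, W_t)` generated by the latent process up to time `t`. -/
def sigmaW {Ω : Type*} (W : ℕ → Ω → ℝ) (t : ℕ) : MeasurableSpace Ω :=
  ⨆ s ∈ Finset.Icc 1 t, MeasurableSpace.comap (W s) inferInstance

/-- The limiting criterion `𝓛(γ₁) = E[Y₃ W₃(β₀, γ₁) - exp (W₃(β₀, γ₁))]`. -/
def glarmaLcal {Ω : Type*} [MeasurableSpace Ω] (μ : Measure Ω) (Y : ℕ → Ω → ℕ)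
    (β₀ γ₁ : ℝ) : ℝ :=
  ∫ ω, ((Y 3 ω : ℝ) * glarmaW β₀ γ₁ (fun s => Y s ω) 3
    - Real.exp (glarmaW β₀ γ₁ (fun s => Y s ω) 3)) ∂μ

/-- The Poisson distribution on `ℕ` with (real) parameter `r`. -/
def poissonMeas (r : ℝ) : Measure ℕ :=
  Measure.sum fun k => (ENNReal.ofReal (poissonP r k)) • Measure.dirac k

/-- The transition kernel of the latent Markov chain `(W_t)`:  given `W_{t-1} = x`, one has
`W_t = (β₀ - γ₁) + γ₁ Y_{t-1} exp (-x)` where `Y_{t-1} ∼ Poisson (exp x)`. -/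
def glarmaKer (β₀ γ₁ : ℝ) (x : ℝ) : Measure ℝ :=
  Measure.map (fun k : ℕ => (β₀ - γ₁) + γ₁ * (k : ℝ) * Real.exp (-x)) (poissonMeas (Real.exp x))

/-- The `n`-step transition kernel of the latent Markov chain. -/
def glarmaKerIter (β₀ γ₁ : ℝ) : ℕ → ℝ → Measure ℝ
  | 0, x => Measure.dirac x
  | n + 1, x => (glarmaKer β₀ γ₁ x).bind (glarmaKerIter β₀ γ₁ n)

/-- `stayProb β₀ γ₁ B m x` is the probability, starting from `W_{t-1} = x`, that the next `m`
states `W_t, …, W_{t+m-1}` of the latent chain all belong to `B`. -/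
def stayProb (β₀ γ₁ : ℝ) (B : Set ℝ) : ℕ → ℝ → ℝ≥0∞
  | 0, _ => 1
  | m + 1, x => ∫⁻ y in B, stayProb β₀ γ₁ B m y ∂(glarmaKer β₀ γ₁ x)



/-! ### Poisson moments and the likelihood inequality -/

lemma poissonP_nonneg {r : ℝ} (hr : 0 ≤ r) (k : ℕ) : 0 ≤ poissonP r k := by
  unfold poissonP; positivity

lemma hasSum_poisson0 (r : ℝ) : HasSum (poissonP r) 1 := by
  have h := NormedSpace.expSeries_div_hasSum_exp (𝔸 := ℝ) r
  rw [← Real.exp_eq_exp_ℝ] at h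
  have h2 := h.mul_left (Real.exp (-r))
  rw [← Real.exp_add, neg_add_cancel, Real.exp_zero] at h2
  refine h2.congr_fun ?_
  intro k
  unfold poissonP; ring

lemma poissonP_succ (r : ℝ) (k : ℕ) :
    ((k : ℝ) + 1) * poissonP r (k + 1) = r * poissonP r k := by
  unfold poissonP
  rw [Nat.factorial_succ]
  push_cast
  have : (k.factorial : ℝ) ≠ 0 := by positivity
  have : (k : ℝ) + 1 ≠ 0 := by positivity
  field_simp
  ring

lemma hasSum_poisson1 (r : ℝ) : HasSum (fun k : ℕ => (k : ℝ) * poissonP r k) r := by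
  rw [← hasSum_nat_add_iff' 1]
  simp only [Finset.sum_range_one, Nat.cast_zero, zero_mul, sub_zero]
  have h := (hasSum_poisson0 r).mul_left r
  rw [mul_one] at h
  refine h.congr_fun ?_
  intro k
  push_cast
  exact poissonP_succ r k

lemma hasSum_poisson2 (r : ℝ) :
    HasSum (fun k : ℕ => (k : ℝ) ^ 2 * poissonP r k) (r ^ 2 + r) := by
  rw [← hasSum_nat_add_iff' 1]
  simp only [Finset.sum_range_one, Nat.cast_zero]
  have h := ((hasSum_poisson1 r).mul_left r).add ((hasSum_poisson0 r).mul_left r)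
  have e : r * r + r * 1 = r ^ 2 + r - 0 ^ 2 * poissonP r 0 := by ring
  rw [e] at h
  refine h.congr_fun ?_
  intro k
  push_cast
  linear_combination ((k : ℝ) + 1) * poissonP_succ r k

lemma hasSum_poisson_sq (r a b : ℝ) :
    HasSum (fun k : ℕ => poissonP r k * (a + b * ((k : ℝ) - r)) ^ 2) (a ^ 2 + b ^ 2 * r) := by
  have h := (((hasSum_poisson2 r).mul_left (b ^ 2)).add
    ((hasSum_poisson1 r).mul_left (2 * b * (a - b * r)))).add
    ((hasSum_poisson0 r).mul_left ((a - b * r) ^ 2))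
  have e : b ^ 2 * (r ^ 2 + r) + 2 * b * (a - b * r) * r + (a - b * r) ^ 2 * 1
    = a ^ 2 + b ^ 2 * r := by ring
  rw [e] at h
  refine h.congr_fun ?_
  intro k
  ring

lemma tsum_ofReal_of_hasSum {r s : ℝ} {g : ℕ → ℝ} (hr : 0 ≤ r) (hg : ∀ k, 0 ≤ g k)
    (h : HasSum (fun k => poissonP r k * g k) s) :
    ∑' k, ENNReal.ofReal (poissonP r k) * ENNReal.ofReal (g k) = ENNReal.ofReal s := by
  rw [← h.tsum_eq, ENNReal.ofReal_tsum_of_nonneg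
    (fun k => mul_nonneg (poissonP_nonneg hr k) (hg k)) h.summable]
  exact tsum_congr fun k => (ENNReal.ofReal_mul (poissonP_nonneg hr k)).symm

/-- Conditional second moment of a martingale sum after adding `b (Y - r)` with
`Y ∼ Poisson r`. -/
lemma tsum_poisson_sq {r : ℝ} (hr : 0 ≤ r) (a b : ℝ) :
    ∑' k : ℕ, ENNReal.ofReal (poissonP r k) * ENNReal.ofReal ((a + b * ((k : ℝ) - r)) ^ 2)
      = ENNReal.ofReal (a ^ 2 + b ^ 2 * r) :=
  tsum_ofReal_of_hasSum hr (fun _ => sq_nonneg _) (hasSum_poisson_sq r a b)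

/-- The same for the centred indicator of `{Y = 0}`, whose variance is at most `1`. -/
lemma tsum_poisson_zero {r : ℝ} (hr : 0 ≤ r) (a : ℝ) :
    ∑' k : ℕ, ENNReal.ofReal (poissonP r k)
        * ENNReal.ofReal ((a + ((if k = 0 then (1 : ℝ) else 0) - Real.exp (-r))) ^ 2)
      ≤ ENNReal.ofReal (a ^ 2 + 1) := by
  set p := Real.exp (-r) with hp
  have hp0 : 0 < p := Real.exp_pos _
  have hp1 : p ≤ 1 := Real.exp_le_one_iff.2 (by linarith)
  have hP0 : poissonP r 0 = p := by simp [poissonP, hp]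
  have h1 : HasSum (fun k : ℕ => if k = 0 then p * ((a + (1 - p)) ^ 2 - (a - p) ^ 2) else 0)
      (p * ((a + (1 - p)) ^ 2 - (a - p) ^ 2)) := hasSum_ite_eq 0 _
  have h2 := h1.add ((hasSum_poisson0 r).mul_left ((a - p) ^ 2))
  have h3 : HasSum (fun k : ℕ => poissonP r k * (a + ((if k = 0 then (1 : ℝ) else 0) - p)) ^ 2)
      (a ^ 2 + p * (1 - p)) := by
    have e : p * ((a + (1 - p)) ^ 2 - (a - p) ^ 2) + (a - p) ^ 2 * 1 = a ^ 2 + p * (1 - p) := by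
      ring
    rw [e] at h2
    refine h2.congr_fun ?_
    intro k
    by_cases hk : k = 0
    · subst hk; simp only [if_true, hP0]; ring
    · simp only [hk, if_false]; ring
  rw [tsum_ofReal_of_hasSum hr (fun _ => sq_nonneg _) h3]
  apply ENNReal.ofReal_le_ofReal
  nlinarith

/-- The excess of the Poisson log-likelihood over its value at `W` is at most the squared
Pearson residual at `W`, whatever the competing parameter `w`. -/
lemma loglik_le_pearson {y : ℝ} (hy : 0 ≤ y) (w W : ℝ) :
    y * w - Real.exp w - (y * W - Real.exp W) ≤ (y - Real.exp W) ^ 2 / Real.exp W := by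
  have hW := Real.exp_pos W
  rw [le_div_iff₀ hW]
  -- the case `W = 0`, to which dividing by `exp W` reduces the claim
  have key : ∀ x : ℝ, 0 ≤ x → ∀ u : ℝ, x * u - Real.exp u + 1 ≤ (x - 1) ^ 2 := by
    intro x hx u
    rcases hx.eq_or_lt with rfl | hx
    · have := Real.exp_pos u; linarith
    · have h1 := Real.add_one_le_exp (u - Real.log x)
      rw [Real.exp_sub, Real.exp_log hx, le_div_iff₀ hx] at h1
      have h2 := Real.log_le_sub_one_of_pos hx
      nlinarith [mul_le_mul_of_nonneg_left h2 hx.le]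
  have h := key (y / Real.exp W) (by positivity) (w - W)
  have h' := mul_le_mul_of_nonneg_left h (sq_nonneg (Real.exp W))
  have e1 : Real.exp W ^ 2 * (y / Real.exp W * (w - W) - Real.exp (w - W) + 1)
      = (y * w - Real.exp w - (y * W - Real.exp W)) * Real.exp W := by
    rw [Real.exp_sub]; field_simp; ring
  have e2 : Real.exp W ^ 2 * (y / Real.exp W - 1) ^ 2 = (y - Real.exp W) ^ 2 := by
    field_simp
  linarith

/-- Nonnegativity of the Kullback divergence between Poisson laws with parameters `exp W` and
`exp w`; conditionally on the past it is the expected loss of log-likelihood from using `w` in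
place of the true latent value `W`. -/
lemma exp_kullback_nonneg (w W : ℝ) :
    0 ≤ Real.exp w - Real.exp W - Real.exp W * (w - W) := by
  have h := Real.add_one_le_exp (w - W)
  rw [Real.exp_sub, le_div_iff₀ (Real.exp_pos W)] at h
  linarith

/-! ### Measurability and conditional Poisson integrals -/

section Model

open scoped Topology

variable {Ω : Type*} {Y : ℕ → Ω → ℕ} {W : ℕ → Ω → ℝ} {β₀ γ₁star : ℝ}

lemma measurable_Y_hist {s t : ℕ} (hs : 1 ≤ s) (hst : s ≤ t) :
    Measurable[histSA W Y t] (Y s) := by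
  refine Measurable.mono (comap_measurable (Y s)) ?_ le_rfl
  exact le_sup_of_le_right (le_iSup₂_of_le s (Finset.mem_Icc.2 ⟨hs, hst⟩) le_rfl)

lemma histSA_mono : Monotone (histSA W Y) := by
  intro s t hst
  refine sup_le_sup le_rfl (iSup₂_le fun u hu => ?_)
  rw [Finset.mem_Icc] at hu
  exact le_iSup₂_of_le u (Finset.mem_Icc.2 ⟨hu.1, hu.2.trans hst⟩) le_rfl

lemma measurable_W_hist
    (hrec : ∀ t, 2 ≤ t → ∀ ω,
      W t ω = β₀ + γ₁star * ((Y (t - 1) ω : ℝ) * Real.exp (-(W (t - 1) ω)) - 1))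
    (t : ℕ) : Measurable[histSA W Y t] (W (t + 1)) := by
  induction t with
  | zero =>
    refine Measurable.mono (comap_measurable (W 1)) ?_ le_rfl
    exact le_sup_left
  | succ t ih =>
    have e : W (t + 1 + 1) = fun ω =>
        β₀ + γ₁star * ((Y (t + 1) ω : ℝ) * Real.exp (-(W (t + 1) ω)) - 1) := by
      funext ω
      exact hrec (t + 1 + 1) (by omega) ω
    rw [e]
    have h1 : Measurable[histSA W Y (t + 1)] (W (t + 1)) :=
      ih.mono (histSA_mono (Nat.le_succ t)) le_rfl
    have h2 : Measurable[histSA W Y (t + 1)] (fun ω => (Y (t + 1) ω : ℝ)) :=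
      (measurable_from_top (f := fun k : ℕ => (k : ℝ))).comp
        (measurable_Y_hist (by omega) le_rfl)
    exact (((h2.mul h1.neg.exp).sub_const 1).const_mul γ₁star).const_add β₀

variable [MeasurableSpace Ω] {μ : Measure Ω}

lemma histSA_le (hYmeas : ∀ t, Measurable (Y t)) (hWmeas : ∀ t, Measurable (W t)) (t : ℕ) :
    histSA W Y t ≤ ‹MeasurableSpace Ω› := by
  refine sup_le (hWmeas 1).comap_le (iSup₂_le fun s _ => ?_)
  exact (hYmeas s).comap_le

lemma measurable_poissonP (k : ℕ) : Measurable fun x : ℝ => poissonP (Real.exp x) k := by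
  unfold poissonP; fun_prop

/-- Conditional Poisson law in integrated form: an integrand depending on the past and on
`Y t` may be averaged over the Poisson weights with parameter `exp (W t)`. -/
lemma lintegral_cond_poisson [IsProbabilityMeasure μ]
    (hYmeas : ∀ t, Measurable (Y t)) (hWmeas : ∀ t, Measurable (W t))
    (hpois : ∀ t, 1 ≤ t → ∀ k : ℕ,
      (μ[(fun ω => if Y t ω = k then (1 : ℝ) else 0) | histSA W Y (t - 1)])
        =ᵐ[μ] fun ω => poissonP (Real.exp (W t ω)) k)
    {t : ℕ} (ht : 1 ≤ t) (f : ℕ → Ω → ℝ≥0∞)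
    (hf : ∀ k, Measurable[histSA W Y (t - 1)] (f k)) :
    ∫⁻ ω, f (Y t ω) ω ∂μ
      = ∫⁻ ω, ∑' k, ENNReal.ofReal (poissonP (Real.exp (W t ω)) k) * f k ω ∂μ := by
  have hm := histSA_le hYmeas hWmeas (t - 1)
  have hfm : ∀ k, Measurable (f k) := fun k => (hf k).mono hm le_rfl
  have hset : ∀ k, MeasurableSet {ω | Y t ω = k} := fun k =>
    hYmeas t (measurableSet_singleton k)
  have hpm : ∀ k, Measurable fun ω => ENNReal.ofReal (poissonP (Real.exp (W t ω)) k) :=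
    fun k => ((measurable_poissonP k).comp (hWmeas t)).ennreal_ofReal
  have h1 : ∀ ω, f (Y t ω) ω = ∑' k, Set.indicator {ω | Y t ω = k} (f k) ω := by
    intro ω
    rw [tsum_eq_single (Y t ω)]
    · simp
    · intro k hk
      simp [Ne.symm hk]
  simp_rw [h1]
  rw [lintegral_tsum fun k => ((hfm k).indicator (hset k)).aemeasurable,
    lintegral_tsum (f := fun k ω => ENNReal.ofReal (poissonP (Real.exp (W t ω)) k) * f k ω)
      fun k => ((hpm k).mul (hfm k)).aemeasurable]
  refine tsum_congr fun k => ?_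
  rw [lintegral_indicator (hset k)]
  have hIntegrable : Integrable (fun ω => if Y t ω = k then (1 : ℝ) else 0) μ := by
    have : (fun ω => if Y t ω = k then (1 : ℝ) else 0)
        = Set.indicator {ω | Y t ω = k} (fun _ => (1 : ℝ)) := by
      funext ω; simp [Set.indicator_apply]
    rw [this]
    exact (integrable_const _).indicator (hset k)
  have hpint : Integrable (fun ω => poissonP (Real.exp (W t ω)) k) μ :=
    (integrable_condExp).congr (hpois t ht k)
  -- both sides are integrals against measures that agree on the past
  have hν : (μ.restrict {ω | Y t ω = k}).trim hm
      = (μ.withDensity fun ω => ENNReal.ofReal (poissonP (Real.exp (W t ω)) k)).trim hm := by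
    refine @Measure.ext Ω (histSA W Y (t - 1)) _ _ fun A hA => ?_
    rw [trim_measurableSet_eq hm hA, trim_measurableSet_eq hm hA,
      Measure.restrict_apply (hm A hA), withDensity_apply _ (hm A hA),
      ← ofReal_integral_eq_lintegral_ofReal hpint.integrableOn
        (Eventually.of_forall fun ω => poissonP_nonneg (Real.exp_pos _).le k)]
    have h2 : ∫ ω in A, poissonP (Real.exp (W t ω)) k ∂μ
        = ∫ ω in A, (if Y t ω = k then (1 : ℝ) else 0) ∂μ := by
      rw [← setIntegral_condExp hm hIntegrable hA]
      exact setIntegral_congr_ae (hm A hA)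
        ((hpois t ht k).mono fun ω h _ => h.symm)
    have h3 : ∫ ω in A, (if Y t ω = k then (1 : ℝ) else 0) ∂μ
        = μ.real (A ∩ {ω | Y t ω = k}) := by
      have : (fun ω => if Y t ω = k then (1 : ℝ) else 0)
          = Set.indicator {ω | Y t ω = k} (fun _ => (1 : ℝ)) := by
        funext ω; simp [Set.indicator_apply]
      rw [this, setIntegral_indicator (hset k)]
      simp
    rw [h2, h3, ofReal_measureReal]
  have h4 := lintegral_trim (μ := μ.restrict {ω | Y t ω = k}) hm (hf k)
  have h5 := lintegral_trim (μ := μ.withDensity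
    fun ω => ENNReal.ofReal (poissonP (Real.exp (W t ω)) k)) hm (hf k)
  rw [← h4, hν, h5, lintegral_withDensity_eq_lintegral_mul _ (hpm k) (hfm k)]
  rfl

/-- The stationary Poisson GLARMA model with `q = 1`: measurability, the latent recursion, the
conditional Poisson law of the observations, and strict stationarity of the latent process from
time `1` on. -/
structure GlarmaModel (μ : Measure Ω) (Y : ℕ → Ω → ℕ) (W : ℕ → Ω → ℝ) (β₀ γ₁star : ℝ) :
    Prop where
  Ymeas : ∀ t, Measurable (Y t)
  Wmeas : ∀ t, Measurable (W t)
  hrec : ∀ t, 2 ≤ t → ∀ ω,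
    W t ω = β₀ + γ₁star * ((Y (t - 1) ω : ℝ) * Real.exp (-(W (t - 1) ω)) - 1)
  pois : ∀ t, 1 ≤ t → ∀ k : ℕ,
    (μ[(fun ω => if Y t ω = k then (1 : ℝ) else 0) | histSA W Y (t - 1)])
      =ᵐ[μ] fun ω => poissonP (Real.exp (W t ω)) k
  stat : ∀ n t : ℕ, 1 ≤ t →
    Measure.map (fun ω => fun i : Fin n => W (t + (i : ℕ)) ω) μ
      = Measure.map (fun ω => fun i : Fin n => W (1 + (i : ℕ)) ω) μ

variable [IsProbabilityMeasure μ]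

omit [IsProbabilityMeasure μ] in
lemma GlarmaModel.W_hist (h : GlarmaModel μ Y W β₀ γ₁star) {t : ℕ} (ht : 1 ≤ t) :
    Measurable[histSA W Y (t - 1)] (W t) := by
  obtain ⟨s, rfl⟩ : ∃ s, t = s + 1 := ⟨t - 1, by omega⟩
  exact measurable_W_hist h.hrec s

lemma GlarmaModel.lintegral_cond (h : GlarmaModel μ Y W β₀ γ₁star)
    {t : ℕ} (ht : 1 ≤ t) (f : ℕ → Ω → ℝ≥0∞)
    (hf : ∀ k, Measurable[histSA W Y (t - 1)] (f k)) :
    ∫⁻ ω, f (Y t ω) ω ∂μ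
      = ∫⁻ ω, ∑' k, ENNReal.ofReal (poissonP (Real.exp (W t ω)) k) * f k ω ∂μ :=
  lintegral_cond_poisson h.Ymeas h.Wmeas h.pois ht f hf

/-! ### Second moments of martingale sums -/

lemma measurable_apply_nat {Ω' : Type*} {m : MeasurableSpace Ω'} {y : Ω' → ℕ} (hy : Measurable y)
    {x : ℕ → Ω' → ℝ} (hx : ∀ k, Measurable (x k)) : Measurable fun ω => x (y ω) ω := by
  intro s hs
  have e : (fun ω => x (y ω) ω) ⁻¹' s = ⋃ k, (y ⁻¹' {k} ∩ x k ⁻¹' s) := by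
    ext ω; simp
  rw [e]
  exact MeasurableSet.iUnion fun k => (hy (measurableSet_singleton k)).inter (hx k hs)

omit [MeasurableSpace Ω] in
lemma measurable_martingale_sum (x : ℕ → ℕ → Ω → ℝ)
    (hx : ∀ t, 1 ≤ t → ∀ k, Measurable[histSA W Y (t - 1)] (x t k)) (n : ℕ) :
    Measurable[histSA W Y n] (fun ω => ∑ t ∈ Finset.Icc 1 n, x t (Y t ω) ω) := by
  refine Finset.measurable_fun_sum _ fun t ht => ?_
  rw [Finset.mem_Icc] at ht
  exact measurable_apply_nat (measurable_Y_hist ht.1 ht.2)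
    fun k => (hx t ht.1 k).mono (histSA_mono (by omega)) le_rfl

/-- Orthogonality of martingale increments, without any integrability side condition: if each
increment `x t (Y t)` increases every conditional second moment by at most `C`, then the sum of
the first `n` increments has second moment at most `n C`. -/
lemma GlarmaModel.martingale_sq (h : GlarmaModel μ Y W β₀ γ₁star) {C : ℝ} (hC : 0 ≤ C)
    (x : ℕ → ℕ → Ω → ℝ)
    (hx : ∀ t, 1 ≤ t → ∀ k, Measurable[histSA W Y (t - 1)] (x t k))
    (hvar : ∀ t, 1 ≤ t → ∀ ω a, ∑' k, ENNReal.ofReal (poissonP (Real.exp (W t ω)) k)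
      * ENNReal.ofReal ((a + x t k ω) ^ 2) ≤ ENNReal.ofReal (a ^ 2 + C)) (n : ℕ) :
    ∫⁻ ω, ENNReal.ofReal ((∑ t ∈ Finset.Icc 1 n, x t (Y t ω) ω) ^ 2) ∂μ
      ≤ ENNReal.ofReal (n * C) := by
  induction n with
  | zero => simp
  | succ n ih =>
    have hS := measurable_martingale_sum x hx n
    have hSm := hS.mono (histSA_le h.Ymeas h.Wmeas n) le_rfl
    set S := fun ω => ∑ t ∈ Finset.Icc 1 n, x t (Y t ω) ω with hSdef
    have e : ∀ ω, ∑ t ∈ Finset.Icc 1 (n + 1), x t (Y t ω) ω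
        = S ω + x (n + 1) (Y (n + 1) ω) ω := fun ω =>
      Finset.sum_Icc_succ_top (by omega) _
    simp_rw [e]
    have key := h.lintegral_cond (t := n + 1) (by omega)
      (fun k ω => ENNReal.ofReal ((S ω + x (n + 1) k ω) ^ 2))
      (fun k => ((hS.add (hx (n + 1) (by omega) k)).pow_const 2).ennreal_ofReal)
    rw [key]
    calc _ ≤ ∫⁻ ω, ENNReal.ofReal (S ω ^ 2 + C) ∂μ :=
          lintegral_mono fun ω => hvar (n + 1) (by omega) ω (S ω)
      _ = ∫⁻ ω, (ENNReal.ofReal (S ω ^ 2) + ENNReal.ofReal C) ∂μ := by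
          simp_rw [ENNReal.ofReal_add (sq_nonneg _) hC]
      _ = ∫⁻ ω, ENNReal.ofReal (S ω ^ 2) ∂μ + ENNReal.ofReal C := by
          rw [lintegral_add_right _ measurable_const]; simp
      _ ≤ ENNReal.ofReal (n * C) + ENNReal.ofReal C := by gcongr
      _ = ENNReal.ofReal (((n + 1 : ℕ) : ℝ) * C) := by
          rw [← ENNReal.ofReal_add (by positivity) hC]; push_cast; ring_nf

/-- Weak law of large numbers for martingale sums (Chebyshev). -/
lemma GlarmaModel.martingale_wlln (h : GlarmaModel μ Y W β₀ γ₁star) {C : ℝ} (hC : 0 ≤ C)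
    (x : ℕ → ℕ → Ω → ℝ)
    (hx : ∀ t, 1 ≤ t → ∀ k, Measurable[histSA W Y (t - 1)] (x t k))
    (hvar : ∀ t, 1 ≤ t → ∀ ω a, ∑' k, ENNReal.ofReal (poissonP (Real.exp (W t ω)) k)
      * ENNReal.ofReal ((a + x t k ω) ^ 2) ≤ ENNReal.ofReal (a ^ 2 + C))
    {b : ℝ} (hb : 0 < b) :
    Tendsto (fun n : ℕ => μ {ω | b * n ≤ |∑ t ∈ Finset.Icc 1 n, x t (Y t ω) ω|})
      atTop (𝓝 0) := by
  have hlim : Tendsto (fun n : ℕ => ENNReal.ofReal (C / b ^ 2 * (1 / (n : ℝ)))) atTop (𝓝 0) := by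
    have := (tendsto_one_div_atTop_nhds_zero_nat (𝕜 := ℝ)).const_mul (C / b ^ 2)
    rw [mul_zero] at this
    simpa using ENNReal.tendsto_ofReal this
  refine tendsto_of_tendsto_of_tendsto_of_le_of_le' tendsto_const_nhds hlim
    (Eventually.of_forall fun n => zero_le) ?_
  filter_upwards [eventually_gt_atTop 0] with n hn
  have hn' : (0 : ℝ) < n := by exact_mod_cast hn
  have hSm := (measurable_martingale_sum x hx n).mono (histSA_le h.Ymeas h.Wmeas n) le_rfl
  have hch := meas_ge_le_lintegral_div (μ := μ)
    (f := fun ω => ENNReal.ofReal ((∑ t ∈ Finset.Icc 1 n, x t (Y t ω) ω) ^ 2))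
    (hSm.pow_const 2).ennreal_ofReal.aemeasurable
    (ε := ENNReal.ofReal ((b * n) ^ 2)) (by
      rw [ne_eq, ENNReal.ofReal_eq_zero, not_le]; positivity) ENNReal.ofReal_ne_top
  refine (measure_mono ?_).trans (hch.trans ?_)
  · intro ω hω
    simp only [Set.mem_ofPred_eq] at hω ⊢
    apply ENNReal.ofReal_le_ofReal
    rw [← sq_abs (∑ t ∈ Finset.Icc 1 n, x t (Y t ω) ω)]
    gcongr
  · refine (ENNReal.div_le_div_right (h.martingale_sq hC x hx hvar n) _).trans ?_
    rw [← ENNReal.ofReal_div_of_pos (by positivity)]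
    apply ENNReal.ofReal_le_ofReal
    apply le_of_eq
    field_simp

/-! ### Stationarity and recurrence of zero observations -/

omit [IsProbabilityMeasure μ] in
lemma GlarmaModel.W_stat (h : GlarmaModel μ Y W β₀ γ₁star) {t : ℕ} (ht : 1 ≤ t) {B : Set ℝ}
    (hB : MeasurableSet B) : μ {ω | W t ω ∈ B} = μ {ω | W 1 ω ∈ B} := by
  have hm : ∀ s, Measurable (fun ω => fun i : Fin 1 => W (s + (i : ℕ)) ω) := fun s =>
    measurable_pi_lambda _ fun i => h.Wmeas _
  have hS : MeasurableSet {w : Fin 1 → ℝ | w 0 ∈ B} := measurable_pi_apply 0 hB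
  have e := congrArg (fun ν => ν {w : Fin 1 → ℝ | w 0 ∈ B}) (h.stat 1 t ht)
  simp only [Measure.map_apply (hm _) hS] at e
  simpa using e

omit [IsProbabilityMeasure μ] in
/-- Stationarity passes to the observations, because `γ₁* ≠ 0` makes `Y t` a function of
`(W t, W (t + 1))`. -/
lemma GlarmaModel.Y_stat (h : GlarmaModel μ Y W β₀ γ₁star) (hγ : γ₁star ≠ 0)
    (J : ℕ) {t : ℕ} (ht : 1 ≤ t) (S : Set (Fin J → ℕ)) :
    μ {ω | (fun i : Fin J => Y (t + (i : ℕ)) ω) ∈ S}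
      = μ {ω | (fun i : Fin J => Y (1 + (i : ℕ)) ω) ∈ S} := by
  have hm : ∀ s, Measurable (fun ω => fun i : Fin (J + 1) => W (s + (i : ℕ)) ω) := fun s =>
    measurable_pi_lambda _ fun i => h.Wmeas _
  let φ : (Fin (J + 1) → ℝ) → (Fin J → ℝ) := fun w i =>
    ((w i.succ - β₀) / γ₁star + 1) * Real.exp (w i.castSucc)
  have hφ : Measurable φ := by
    refine measurable_pi_lambda _ fun i => ?_
    fun_prop
  let c : (Fin J → ℕ) → (Fin J → ℝ) := fun v i => (v i : ℝ)
  have hc : Function.Injective c := by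
    intro v w hvw
    funext i
    exact Nat.cast_injective (R := ℝ) (congrFun hvw i)
  have hS : MeasurableSet (φ ⁻¹' (c '' S)) :=
    hφ (((Set.to_countable S).image c).measurableSet)
  have hpre : ∀ s, 1 ≤ s → (fun ω => fun i : Fin (J + 1) => W (s + (i : ℕ)) ω) ⁻¹'
      (φ ⁻¹' (c '' S)) = {ω | (fun i : Fin J => Y (s + (i : ℕ)) ω) ∈ S} := by
    intro s hs
    ext ω
    have : φ (fun i : Fin (J + 1) => W (s + (i : ℕ)) ω)
        = c (fun i : Fin J => Y (s + (i : ℕ)) ω) := by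
      funext i
      have hr := h.hrec (s + (i : ℕ) + 1) (by omega) ω
      simp only [Nat.add_sub_cancel] at hr
      simp only [φ, c, Fin.val_succ, Fin.val_castSucc, ← add_assoc]
      rw [hr, Real.exp_neg]
      have := (Real.exp_pos (W (s + (i : ℕ)) ω)).ne'
      field_simp
      ring
    simp only [Set.mem_preimage, this, Set.mem_ofPred_eq]
    exact hc.mem_set_image
  have e := congrArg (fun ν => ν (φ ⁻¹' (c '' S))) (h.stat (J + 1) t ht)
  simp only [Measure.map_apply (hm _) hS] at e
  rwa [hpre t ht, hpre 1 le_rfl] at e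

lemma GlarmaModel.W_tight (h : GlarmaModel μ Y W β₀ γ₁star) :
    Tendsto (fun M : ℕ => μ.real {ω | (M : ℝ) < W 1 ω}) atTop (𝓝 0) := by
  have hmeas : ∀ M : ℕ, NullMeasurableSet {ω | (M : ℝ) < W 1 ω} μ := fun M =>
    (measurableSet_lt measurable_const (h.Wmeas 1)).nullMeasurableSet
  have h1 := tendsto_measure_iInter_atTop (μ := μ) (s := fun M : ℕ => {ω | (M : ℝ) < W 1 ω})
    hmeas (fun M N hMN ω hω => by
      have h2 : (N : ℝ) < W 1 ω := hω
      have h3 : (M : ℝ) ≤ N := by exact_mod_cast hMN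
      exact h3.trans_lt h2) ⟨0, measure_ne_top _ _⟩
  have e : ⋂ M : ℕ, {ω | (M : ℝ) < W 1 ω} = ∅ := by
    ext ω
    obtain ⟨M, hM⟩ := exists_nat_gt (W 1 ω)
    simp only [Set.mem_iInter, Set.mem_ofPred_eq, Set.mem_empty_iff_false, iff_false, not_forall]
    exact ⟨M, by linarith⟩
  rw [e, measure_empty] at h1
  have := (ENNReal.tendsto_toReal (by simp : (0 : ℝ≥0∞) ≠ ⊤)).comp h1
  rw [ENNReal.toReal_zero] at this
  exact this

omit [IsProbabilityMeasure μ] in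
lemma GlarmaModel.W_tail (h : GlarmaModel μ Y W β₀ γ₁star) {t : ℕ} (ht : 1 ≤ t) (M : ℝ) :
    μ.real {ω | M < W t ω} = μ.real {ω | M < W 1 ω} := by
  have := h.W_stat ht (B := Set.Ioi M) measurableSet_Ioi
  simp only [Set.mem_Ioi] at this
  simp [Measure.real, this]

/-- The event that none of the first `J` observations vanishes. -/
def noZero (Y : ℕ → Ω → ℕ) (J : ℕ) : Set Ω := {ω | ∀ s ∈ Finset.Icc 1 J, Y s ω ≠ 0}

omit [MeasurableSpace Ω] in
lemma measurableSet_noZero_hist (J : ℕ) : MeasurableSet[histSA W Y J] (noZero Y J) := by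
  have e : noZero Y J = ⋂ s ∈ Finset.Icc 1 J, (Y s ⁻¹' {0})ᶜ := by
    ext ω; simp [noZero]
  rw [e]
  refine Finset.measurableSet_biInter _ fun s hs => ?_
  rw [Finset.mem_Icc] at hs
  exact (measurable_Y_hist hs.1 hs.2 (measurableSet_singleton 0)).compl

/-- One step of the recurrence argument: on `{W ≤ M}` the next observation vanishes with
conditional probability at least `exp (-exp M)`. -/
lemma GlarmaModel.noZero_step (h : GlarmaModel μ Y W β₀ γ₁star) (J : ℕ) (M : ℝ) :
    Real.exp (-Real.exp M) * (μ.real (noZero Y J) - μ.real {ω | M < W 1 ω})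
      ≤ μ.real (noZero Y J) - μ.real (noZero Y (J + 1)) := by
  have hA := measurableSet_noZero_hist (W := W) (Y := Y) J
  have hle := histSA_le h.Ymeas h.Wmeas
  have hAm := hle J _ hA
  have hA1m := hle (J + 1) _ (measurableSet_noZero_hist (W := W) (Y := Y) (J + 1))
  have hWm : MeasurableSet {ω | M < W (J + 1) ω} :=
    measurableSet_lt measurable_const (h.Wmeas _)
  have hsub : noZero Y (J + 1) ⊆ noZero Y J := fun ω hω s hs => hω s
    (Finset.Icc_subset_Icc_right (Nat.le_succ J) hs)
  have hdiff : noZero Y J \ noZero Y (J + 1) = noZero Y J ∩ {ω | Y (J + 1) ω = 0} := by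
    ext ω
    constructor
    · rintro ⟨h1, h2⟩
      refine ⟨h1, ?_⟩
      by_contra h3
      refine h2 fun s hs => ?_
      rw [Finset.mem_Icc] at hs
      rcases hs.2.lt_or_eq with h4 | h4
      · exact h1 s (Finset.mem_Icc.2 ⟨hs.1, by omega⟩)
      · rw [h4]; exact h3
    · rintro ⟨h1, h2⟩
      exact ⟨h1, fun h3 => h3 (J + 1) (by simp) h2⟩
  rw [← measureReal_sdiff hsub hA1m, hdiff]
  have hf : ∀ k, Measurable[histSA W Y (J + 1 - 1)]
      (fun ω => (noZero Y J).indicator (fun _ => if k = 0 then (1 : ℝ≥0∞) else 0) ω) := fun k =>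
    measurable_const.indicator hA
  have key := h.lintegral_cond (t := J + 1) (by omega)
    (fun k => (noZero Y J).indicator (fun _ => if k = 0 then (1 : ℝ≥0∞) else 0)) hf
  have e1 : ∫⁻ ω, (noZero Y J).indicator (fun _ => if Y (J + 1) ω = 0 then (1 : ℝ≥0∞) else 0) ω ∂μ
      = μ (noZero Y J ∩ {ω | Y (J + 1) ω = 0}) := by
    have hB : MeasurableSet {ω | Y (J + 1) ω = 0} :=
      h.Ymeas (J + 1) (measurableSet_singleton 0)
    rw [← lintegral_indicator_one (hAm.inter hB)]
    refine lintegral_congr fun ω => ?_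
    by_cases h1 : ω ∈ noZero Y J <;> by_cases h2 : Y (J + 1) ω = 0 <;>
      simp [Set.indicator, h1, h2]
  have e2 : ENNReal.ofReal (Real.exp (-Real.exp M)) * μ (noZero Y J ∩ {ω | M < W (J + 1) ω}ᶜ)
      ≤ ∫⁻ ω, ∑' k, ENNReal.ofReal (poissonP (Real.exp (W (J + 1) ω)) k)
        * (noZero Y J).indicator (fun _ => if k = 0 then (1 : ℝ≥0∞) else 0) ω ∂μ := by
    rw [← lintegral_indicator_const (hAm.inter hWm.compl)]
    refine lintegral_mono fun ω => ?_
    by_cases h1 : ω ∈ noZero Y J ∩ {ω | M < W (J + 1) ω}ᶜ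
    · rw [Set.indicator_of_mem h1]
      refine le_trans ?_ (ENNReal.le_tsum 0)
      have h2 : W (J + 1) ω ≤ M := not_lt.1 h1.2
      simp only [Set.indicator_of_mem h1.1, if_true, mul_one]
      apply ENNReal.ofReal_le_ofReal
      simp only [poissonP, pow_zero, mul_one, Nat.factorial_zero, Nat.cast_one, div_one]
      gcongr
    · rw [Set.indicator_of_notMem h1]; exact zero_le
  have e3 := ENNReal.toReal_mono (measure_ne_top _ _) (e2.trans (key.symm.le.trans e1.le))
  rw [ENNReal.toReal_mul, ENNReal.toReal_ofReal (Real.exp_pos _).le] at e3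
  refine le_trans ?_ e3
  gcongr
  have e4 := measureReal_inter_add_sdiff (μ := μ) (s := noZero Y J) hWm
  have e5 : μ.real (noZero Y J ∩ {ω | M < W (J + 1) ω}) ≤ μ.real {ω | M < W 1 ω} := by
    rw [← h.W_tail (t := J + 1) (by omega)]
    exact measureReal_mono Set.inter_subset_right
  have e6 : noZero Y J \ {ω | M < W (J + 1) ω} = noZero Y J ∩ {ω | M < W (J + 1) ω}ᶜ := rfl
  rw [e6] at e4
  change _ ≤ μ.real _
  linarith

/-- Zero observations are recurrent. The probabilities of seeing no zero up to time `J` decrease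
to a limit `a`; by `noZero_step`, `a ≤ P(W 1 > M)` for every `M`, and the law of `W 1` is tight. -/
lemma GlarmaModel.noZero_tendsto (h : GlarmaModel μ Y W β₀ γ₁star) :
    Tendsto (fun J : ℕ => μ.real (noZero Y J)) atTop (𝓝 0) := by
  have hanti : Antitone fun J : ℕ => μ.real (noZero Y J) := fun J K hJK =>
    measureReal_mono fun ω hω s hs => hω s (Finset.Icc_subset_Icc_right hJK hs)
  have hlim := tendsto_atTop_ciInf hanti ⟨0, by rintro _ ⟨J, rfl⟩; exact measureReal_nonneg⟩
  set a := ⨅ J : ℕ, μ.real (noZero Y J)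
  have ha0 : 0 ≤ a := ge_of_tendsto' hlim fun J => measureReal_nonneg
  have haM : ∀ M : ℕ, a ≤ μ.real {ω | (M : ℝ) < W 1 ω} := by
    intro M
    have h1 : Tendsto (fun J : ℕ => Real.exp (-Real.exp M)
        * (μ.real (noZero Y J) - μ.real {ω | (M : ℝ) < W 1 ω})) atTop
        (𝓝 (Real.exp (-Real.exp M) * (a - μ.real {ω | (M : ℝ) < W 1 ω}))) :=
      (hlim.sub_const _).const_mul _
    have h2 := hlim.sub (hlim.comp (tendsto_add_atTop_nat 1))
    have h3 := le_of_tendsto_of_tendsto' h1 h2 fun J => h.noZero_step J M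
    rw [sub_self] at h3
    have := nonpos_of_mul_nonpos_right h3 (Real.exp_pos _)
    linarith
  have : a ≤ 0 := ge_of_tendsto' h.W_tight haM
  rwa [le_antisymm this ha0] at hlim

lemma GlarmaModel.ae_exists_zero (h : GlarmaModel μ Y W β₀ γ₁star) :
    ∀ᵐ ω ∂μ, ∃ s, 1 ≤ s ∧ Y s ω = 0 := by
  have h0 : μ.real {ω | ¬ ∃ s, 1 ≤ s ∧ Y s ω = 0} ≤ 0 := by
    refine ge_of_tendsto' h.noZero_tendsto fun J => measureReal_mono ?_
    intro ω hω s hs h0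
    exact hω ⟨s, (Finset.mem_Icc.1 hs).1, h0⟩
  rw [ae_iff]
  have := le_antisymm h0 measureReal_nonneg
  rwa [measureReal_eq_zero_iff] at this

/-- A positive proportion of the observations vanishes, with probability close to one. The count
of zeros is compared with its compensator, and the latter is bounded below by
`exp (-exp M)` times the number of times at which `W ≤ M`; no ergodic theorem is needed. -/
lemma GlarmaModel.zero_freq (h : GlarmaModel μ Y W β₀ γ₁star) {ρ : ℝ} (hρ : 0 < ρ) :
    ∃ c : ℝ, 0 < c ∧ ∀ᶠ n : ℕ in atTop,
      μ.real {ω | ∑ t ∈ Finset.Icc 1 n, (if 2 ≤ t ∧ Y (t - 1) ω = 0 then (1 : ℝ) else 0) < c * n}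
        ≤ ρ := by
  obtain ⟨M, hM⟩ := ((h.W_tight).eventually (gt_mem_nhds (show (0 : ℝ) < ρ / 4 by positivity))).exists
  set κ := Real.exp (-Real.exp M) with hκ
  have hκ0 : 0 < κ := Real.exp_pos _
  refine ⟨κ / 8, by positivity, ?_⟩
  -- the compensated count of zeros
  let x : ℕ → ℕ → Ω → ℝ := fun t k ω => (if k = 0 then (1 : ℝ) else 0) - Real.exp (-Real.exp (W t ω))
  have hx : ∀ t, 1 ≤ t → ∀ k, Measurable[histSA W Y (t - 1)] (x t k) := fun t ht k =>
    ((h.W_hist ht).exp.neg.exp).const_sub _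
  have hmart := h.martingale_wlln zero_le_one x hx
    (fun t _ ω a => tsum_poisson_zero (Real.exp_pos _).le a) (b := κ / 4) (by positivity)
  have hmart' := (ENNReal.tendsto_toReal (by simp : (0 : ℝ≥0∞) ≠ ⊤)).comp hmart
  rw [ENNReal.toReal_zero] at hmart'
  have hev := hmart'.eventually (gt_mem_nhds (show (0 : ℝ) < ρ / 2 by positivity))
  filter_upwards [hev, eventually_ge_atTop 1, eventually_ge_atTop ⌈8 / κ⌉₊] with n hn1 hn0 hn2
  have hn0' : (1 : ℝ) ≤ n := by exact_mod_cast hn0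
  have hn2' : 1 ≤ κ / 8 * n := by
    have := Nat.ceil_le.1 hn2
    rw [div_le_iff₀ hκ0] at this
    linarith
  let K : Ω → ℝ≥0∞ := fun ω => ∑ t ∈ Finset.Icc 1 n, {ω | (M : ℝ) < W t ω}.indicator 1 ω
  have hset : ∀ t, MeasurableSet {ω | (M : ℝ) < W t ω} := fun t =>
    measurableSet_lt measurable_const (h.Wmeas t)
  have hKm : Measurable K :=
    Finset.measurable_fun_sum _ fun t _ => measurable_one.indicator (hset t)
  have hKint : ∫⁻ ω, K ω ∂μ = n * μ {ω | (M : ℝ) < W 1 ω} := by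
    rw [lintegral_finsetSum _ fun t _ => measurable_one.indicator (hset t)]
    rw [Finset.sum_congr rfl (g := fun _ => μ {ω | (M : ℝ) < W 1 ω})]
    · simp
    · intro t ht
      rw [Finset.mem_Icc] at ht
      rw [lintegral_indicator_one (hset t)]
      exact h.W_stat ht.1 (B := Set.Ioi (M : ℝ)) measurableSet_Ioi
  have hKmarkov : μ.real {ω | ENNReal.ofReal (n / 2) ≤ K ω} ≤ ρ / 2 := by
    have h1 := mul_meas_ge_le_lintegral (μ := μ) hKm (ENNReal.ofReal (n / 2))
    rw [hKint] at h1
    have h2 := ENNReal.toReal_mono (ENNReal.mul_ne_top (ENNReal.natCast_ne_top n)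
      (measure_ne_top _ _)) h1
    rw [ENNReal.toReal_mul, ENNReal.toReal_mul, ENNReal.toReal_ofReal (by positivity),
      ENNReal.toReal_natCast] at h2
    change (n : ℝ) / 2 * μ.real _ ≤ n * μ.real _ at h2
    nlinarith
  have hsub : {ω | ∑ t ∈ Finset.Icc 1 n, (if 2 ≤ t ∧ Y (t - 1) ω = 0 then (1 : ℝ) else 0)
      < κ / 8 * n} ⊆ {ω | κ / 4 * n ≤ |∑ t ∈ Finset.Icc 1 n, x t (Y t ω) ω|}
        ∪ {ω | ENNReal.ofReal (n / 2) ≤ K ω} := by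
    intro ω hω
    by_contra hcon
    simp only [Set.mem_union, Set.mem_ofPred_eq, not_or, not_le] at hcon hω
    obtain ⟨hc1, hc2⟩ := hcon
    have hshift : ∀ m : ℕ, ∑ t ∈ Finset.Icc 1 m, (if Y t ω = 0 then (1 : ℝ) else 0)
        = ∑ t ∈ Finset.Icc 1 m, (if 2 ≤ t ∧ Y (t - 1) ω = 0 then (1 : ℝ) else 0)
          + if 1 ≤ m ∧ Y m ω = 0 then (1 : ℝ) else 0 := by
      intro m
      induction m with
      | zero => simp
      | succ m ih =>
        rw [Finset.sum_Icc_succ_top (by omega), Finset.sum_Icc_succ_top (by omega), ih]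
        have e : (2 ≤ m + 1) = (1 ≤ m) := by
          apply propext; omega
        simp [e]
    have hlast : (if 1 ≤ n ∧ Y n ω = 0 then (1 : ℝ) else 0) ≤ 1 := by split_ifs <;> norm_num
    have hKr : K ω = ENNReal.ofReal
        (∑ t ∈ Finset.Icc 1 n, if (M : ℝ) < W t ω then (1 : ℝ) else 0) := by
      rw [ENNReal.ofReal_sum_of_nonneg (fun t _ => by split_ifs <;> norm_num)]
      refine Finset.sum_congr rfl fun t _ => ?_
      by_cases hW : (M : ℝ) < W t ω <;> simp [Set.indicator, hW]
    rw [hKr] at hc2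
    have hc2' := (ENNReal.ofReal_lt_ofReal_iff (by positivity)).1 hc2
    have hcomp : κ * (n - ∑ t ∈ Finset.Icc 1 n, if (M : ℝ) < W t ω then (1 : ℝ) else 0)
        ≤ ∑ t ∈ Finset.Icc 1 n, Real.exp (-Real.exp (W t ω)) := by
      have e : (n : ℝ) = ∑ t ∈ Finset.Icc 1 n, (1 : ℝ) := by simp
      rw [e, ← Finset.sum_sub_distrib, Finset.mul_sum]
      refine Finset.sum_le_sum fun t _ => ?_
      split_ifs with hW
      · simp [(Real.exp_pos _).le]
      · rw [sub_zero, mul_one, hκ]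
        rw [not_lt] at hW
        gcongr
    have hxs : ∑ t ∈ Finset.Icc 1 n, x t (Y t ω) ω
        = ∑ t ∈ Finset.Icc 1 n, (if Y t ω = 0 then (1 : ℝ) else 0)
          - ∑ t ∈ Finset.Icc 1 n, Real.exp (-Real.exp (W t ω)) := by
      rw [← Finset.sum_sub_distrib]
    have habs := (abs_lt.1 hc1).1
    rw [hxs, hshift n] at habs
    nlinarith
  refine (measureReal_mono hsub).trans ((measureReal_union_le _ _).trans ?_)
  change μ.real _ < _ at hn1
  linarith

/-! ### The candidate latent process after a zero observation -/

/-- `i` steps of the latent recursion driven by the observations `y 0, y 1, …`, from the latent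
value `w`. -/
def glarmaIter (β₀ γ : ℝ) (y : ℕ → ℕ) (w : ℝ) : ℕ → ℝ
  | 0 => w
  | i + 1 => β₀ + γ * ((y i : ℝ) * Real.exp (-(glarmaIter β₀ γ y w i)) - 1)

lemma glarmaW_succ (β₀ γ : ℝ) (y : ℕ → ℕ) {s : ℕ} (hs : 1 ≤ s) :
    glarmaW β₀ γ y (s + 1) = β₀ + γ * ((y s : ℝ) * Real.exp (-(glarmaW β₀ γ y s)) - 1) := by
  obtain ⟨r, rfl⟩ : ∃ r, s = r + 1 := ⟨s - 1, by omega⟩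
  rfl

lemma glarmaW_add (β₀ γ : ℝ) (y : ℕ → ℕ) {s : ℕ} (hs : 1 ≤ s) (m : ℕ) :
    glarmaW β₀ γ y (s + m) = glarmaIter β₀ γ (fun i => y (s + i)) (glarmaW β₀ γ y s) m := by
  induction m with
  | zero => rfl
  | succ m ih =>
    rw [← add_assoc, glarmaW_succ _ _ _ (by omega), ih]
    rfl

omit [IsProbabilityMeasure μ] in
lemma GlarmaModel.W_succ (h : GlarmaModel μ Y W β₀ γ₁star) {s : ℕ} (hs : 1 ≤ s) (ω : Ω) :
    W (s + 1) ω = β₀ + γ₁star * ((Y s ω : ℝ) * Real.exp (-(W s ω)) - 1) := by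
  simpa using h.hrec (s + 1) (by omega) ω

omit [IsProbabilityMeasure μ] in
lemma GlarmaModel.W_add (h : GlarmaModel μ Y W β₀ γ₁star) {s : ℕ} (hs : 1 ≤ s) (m : ℕ) (ω : Ω) :
    W (s + m) ω = glarmaIter β₀ γ₁star (fun i => Y (s + i) ω) (W s ω) m := by
  induction m with
  | zero => rfl
  | succ m ih =>
    rw [← add_assoc, h.W_succ (by omega), ih]
    rfl

/-- A zero observation erases the latent past. -/
lemma glarmaIter_forget (β₀ γ : ℝ) (y : ℕ → ℕ) (w w' : ℝ) (m : ℕ) (hy : ∃ i < m, y i = 0) :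
    glarmaIter β₀ γ y w m = glarmaIter β₀ γ y w' m := by
  induction m with
  | zero => obtain ⟨i, hi, _⟩ := hy; omega
  | succ m ih =>
    obtain ⟨i, hi, h0⟩ := hy
    rcases Nat.lt_succ_iff_lt_or_eq.1 hi with hlt | rfl
    · simp only [glarmaIter, ih ⟨i, hlt, h0⟩]
    · simp only [glarmaIter, h0, Nat.cast_zero, zero_mul]

lemma glarmaIter_congr (β₀ γ : ℝ) {y y' : ℕ → ℕ} (w : ℝ) (m : ℕ) (hy : ∀ i < m, y i = y' i) :
    glarmaIter β₀ γ y w m = glarmaIter β₀ γ y' w m := by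
  induction m with
  | zero => rfl
  | succ m ih =>
    simp only [glarmaIter, ih fun i hi => hy i (by omega), hy m (by omega)]

lemma continuous_glarmaIter (β₀ : ℝ) (y : ℕ → ℕ) (w : ℝ) (m : ℕ) :
    Continuous fun γ => glarmaIter β₀ γ y w m := by
  induction m with
  | zero => exact continuous_const
  | succ m ih =>
    simp only [glarmaIter]
    fun_prop

/-- The latent value reached after the observation pattern `v`, started (arbitrarily) from `β₀`;
the starting value is irrelevant when `v` contains a zero. -/
def patternW (β₀ γ : ℝ) {J : ℕ} (v : Fin J → ℕ) : ℝ :=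
  glarmaIter β₀ γ (fun i => if hi : i < J then v ⟨i, hi⟩ else 0) β₀ J

/-- The last `J` observations before time `t`; meaningful for `J < t` only. -/
def window (Y : ℕ → Ω → ℕ) (J t : ℕ) (ω : Ω) : Fin J → ℕ := fun i => Y (t - J + (i : ℕ)) ω

lemma glarmaIter_eq_patternW (β₀ γ : ℝ) {J : ℕ} {v : Fin J → ℕ} {y : ℕ → ℕ}
    (hv : ∀ i : Fin J, y i = v i) (h0 : ∃ i, v i = 0) (w : ℝ) :
    glarmaIter β₀ γ y w J = patternW β₀ γ v := by
  obtain ⟨i, hi⟩ := h0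
  rw [glarmaIter_forget β₀ γ y w β₀ J ⟨i, i.2, (hv i).trans hi⟩]
  refine glarmaIter_congr β₀ γ β₀ J fun i hi => ?_
  simp [hi, ← hv]

omit [MeasurableSpace Ω] in
/-- Once a zero has been seen among the last `J` observations, the candidate latent value depends
on these observations only, whatever the time `t`. -/
lemma glarmaW_eq_patternW (β₀ γ : ℝ) {J t : ℕ} (hJ : J < t) (ω : Ω)
    (h0 : ∃ i, window Y J t ω i = 0) :
    glarmaW β₀ γ (fun s => Y s ω) t = patternW β₀ γ (window Y J t ω) := by
  have e := glarmaW_add β₀ γ (fun s => Y s ω) (s := t - J) (by omega) J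
  rw [Nat.sub_add_cancel hJ.le] at e
  rw [e]
  exact glarmaIter_eq_patternW β₀ γ (fun _ => rfl) h0 _

omit [IsProbabilityMeasure μ] in
lemma GlarmaModel.W_eq_patternW (h : GlarmaModel μ Y W β₀ γ₁star) {J t : ℕ} (hJ : J < t) (ω : Ω)
    (h0 : ∃ i, window Y J t ω i = 0) :
    W t ω = patternW β₀ γ₁star (window Y J t ω) := by
  have e := h.W_add (s := t - J) (by omega) J ω
  rw [Nat.sub_add_cancel hJ.le] at e
  rw [e]
  exact glarmaIter_eq_patternW β₀ γ₁star (fun _ => rfl) h0 _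

omit [IsProbabilityMeasure μ] in
/-- The candidate process for the true parameter, which starts from `β₀` and not from `W 1`,
agrees with the true latent process after any zero observation. -/
lemma GlarmaModel.coupled (h : GlarmaModel μ Y W β₀ γ₁star) {s : ℕ} (hs : 1 ≤ s) {ω : Ω}
    (h0 : Y s ω = 0) (t : ℕ) (ht : s < t) :
    glarmaW β₀ γ₁star (fun s => Y s ω) t = W t ω := by
  obtain ⟨m, rfl⟩ : ∃ m, t = s + (m + 1) := ⟨t - s - 1, by omega⟩
  rw [h.W_add hs, glarmaW_add _ _ _ hs]
  exact glarmaIter_forget _ _ _ _ _ _ ⟨0, by omega, h0⟩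

/-- Up to small probability, uniformly in time, the last `J` observations form one of finitely
many patterns, each containing a zero. -/
lemma GlarmaModel.exists_patterns (h : GlarmaModel μ Y W β₀ γ₁star) (hγ : γ₁star ≠ 0)
    {η : ℝ} (hη : 0 < η) :
    ∃ (J : ℕ) (P : Finset (Fin J → ℕ)), (∀ v ∈ P, ∃ i, v i = 0) ∧
      ∀ t, J < t → μ.real {ω | window Y J t ω ∉ P} ≤ η := by
  obtain ⟨J, hJ⟩ := (h.noZero_tendsto.eventually
    (gt_mem_nhds (show (0 : ℝ) < η / 2 by positivity))).exists
  have hmeas : ∀ K : ℕ, MeasurableSet {ω | ∃ i : Fin J, K < Y (1 + (i : ℕ)) ω} := fun K => by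
    have e : {ω | ∃ i : Fin J, K < Y (1 + (i : ℕ)) ω}
        = ⋃ i : Fin J, Y (1 + (i : ℕ)) ⁻¹' Set.Ioi K := by
      ext ω; simp
    rw [e]
    exact MeasurableSet.iUnion fun i => h.Ymeas _ measurableSet_Ioi
  have htight := tendsto_measure_iInter_atTop (μ := μ)
    (s := fun K : ℕ => {ω | ∃ i : Fin J, K < Y (1 + (i : ℕ)) ω})
    (fun K => (hmeas K).nullMeasurableSet)
    (fun K L hKL ω hω => by
      obtain ⟨i, hi⟩ : ∃ i : Fin J, L < Y (1 + (i : ℕ)) ω := hω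
      exact ⟨i, lt_of_le_of_lt hKL hi⟩) ⟨0, measure_ne_top _ _⟩
  have hempty : ⋂ K : ℕ, {ω | ∃ i : Fin J, K < Y (1 + (i : ℕ)) ω} = ∅ := by
    ext ω
    simp only [Set.mem_iInter, Set.mem_ofPred_eq, Set.mem_empty_iff_false, iff_false, not_forall,
      not_exists, not_lt]
    exact ⟨∑ i : Fin J, Y (1 + (i : ℕ)) ω, fun i =>
      Finset.single_le_sum (f := fun i : Fin J => Y (1 + (i : ℕ)) ω) (fun _ _ => Nat.zero_le _)
        (Finset.mem_univ i)⟩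
  rw [hempty, measure_empty] at htight
  have htight' := (ENNReal.tendsto_toReal (by simp : (0 : ℝ≥0∞) ≠ ⊤)).comp htight
  rw [ENNReal.toReal_zero] at htight'
  obtain ⟨K, hK⟩ := (htight'.eventually
    (gt_mem_nhds (show (0 : ℝ) < η / 2 by positivity))).exists
  refine ⟨J, (Fintype.piFinset fun _ : Fin J => Finset.range (K + 1)).filter
    (fun v => ∃ i, v i = 0), fun v hv => (Finset.mem_filter.1 hv).2, fun t ht => ?_⟩
  set P := (Fintype.piFinset fun _ : Fin J => Finset.range (K + 1)).filter
    (fun v => ∃ i, v i = 0)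
  have e : μ.real {ω | window Y J t ω ∉ P}
      = μ.real {ω | (fun i : Fin J => Y (1 + (i : ℕ)) ω) ∉ P} := by
    have := h.Y_stat hγ J (t := t - J) (by omega) {v | v ∉ P}
    simp only [Set.mem_ofPred_eq] at this
    exact congrArg ENNReal.toReal this
  rw [e]
  have hsub : {ω | (fun i : Fin J => Y (1 + (i : ℕ)) ω) ∉ P}
      ⊆ noZero Y J ∪ {ω | ∃ i : Fin J, K < Y (1 + (i : ℕ)) ω} := by
    intro ω hω
    by_contra hcon
    simp only [Set.mem_union, Set.mem_ofPred_eq, not_or, not_exists, not_lt, noZero, not_forall,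
      not_not] at hcon hω
    obtain ⟨⟨s, hs, hs0⟩, h2⟩ := hcon
    rw [Finset.mem_Icc] at hs
    refine hω (Finset.mem_filter.2 ⟨Fintype.mem_piFinset.2 fun i =>
      Finset.mem_range.2 (Nat.lt_succ_of_le (h2 i)), ⟨s - 1, by omega⟩, ?_⟩)
    have : 1 + (s - 1) = s := by omega
    simpa [this] using hs0
  refine (measureReal_mono hsub).trans ((measureReal_union_le _ _).trans ?_)
  change μ.real _ < _ at hK
  linarith

/-! ### The three error terms -/

/-- The squared Pearson residual of `Y t` at the true latent value. -/
def pearson (Y : ℕ → Ω → ℕ) (W : ℕ → Ω → ℝ) (t : ℕ) (ω : Ω) : ℝ :=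
  ((Y t ω : ℝ) - Real.exp (W t ω)) ^ 2 / Real.exp (W t ω)

/-- The Pearson residual at the candidate latent value for the true parameter, counted only while
the candidate process has not yet merged with the true one. -/
def startErr (Y : ℕ → Ω → ℕ) (W : ℕ → Ω → ℝ) (β₀ γ : ℝ) (t : ℕ) (ω : Ω) : ℝ :=
  if glarmaW β₀ γ (fun s => Y s ω) t = W t ω then 0
  else ((Y t ω : ℝ) - Real.exp (glarmaW β₀ γ (fun s => Y s ω) t)) ^ 2
    / Real.exp (glarmaW β₀ γ (fun s => Y s ω) t)

/-- The times `t` at which the last `J` observations do not form a pattern in `P`. -/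
def badSet (Y : ℕ → Ω → ℕ) {J : ℕ} (P : Finset (Fin J → ℕ)) (t : ℕ) : Set Ω :=
  {ω | t ≤ J ∨ window Y J t ω ∉ P}

open scoped Classical in
/-- The martingale increment attached to the pattern `v`, as a function of the value `k` of
the observation. -/
def patternInc (Y : ℕ → Ω → ℕ) (W : ℕ → Ω → ℝ) {J : ℕ} (v : Fin J → ℕ) (t k : ℕ) (ω : Ω) : ℝ :=
  (if J < t ∧ window Y J t ω = v then 1 else 0) * ((k : ℝ) - Real.exp (W t ω))

omit [MeasurableSpace Ω] in
lemma measurable_window_hist {J t : ℕ} (hJ : J < t) :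
    Measurable[histSA W Y (t - 1)] (window Y J t) :=
  @measurable_pi_lambda _ _ _ (histSA W Y (t - 1)) _ _ fun i => measurable_Y_hist (by omega) (by omega)

omit [MeasurableSpace Ω] in
lemma measurableSet_badSet_hist {J : ℕ} (P : Finset (Fin J → ℕ)) (t : ℕ) :
    MeasurableSet[histSA W Y (t - 1)] (badSet Y P t) := by
  by_cases hJ : t ≤ J
  · have e : badSet Y P t = Set.univ := by
      ext ω; simp [badSet, hJ]
    rw [e]; exact MeasurableSet.univ
  · have e : badSet Y P t = window Y J t ⁻¹' {v | v ∉ P} := by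
      ext ω; simp [badSet, hJ]
    rw [e]
    exact measurable_window_hist (not_le.1 hJ) (Set.to_countable _).measurableSet

lemma GlarmaModel.patternInc_wlln (h : GlarmaModel μ Y W β₀ γ₁star) {J : ℕ} {v : Fin J → ℕ}
    (hv : ∃ i, v i = 0) {b : ℝ} (hb : 0 < b) :
    Tendsto (fun n : ℕ => μ {ω | b * n ≤ |∑ t ∈ Finset.Icc 1 n, patternInc Y W v t (Y t ω) ω|})
      atTop (𝓝 0) := by
  classical
  refine h.martingale_wlln (C := Real.exp (patternW β₀ γ₁star v)) (Real.exp_pos _).le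
    (patternInc Y W v) ?_ ?_ hb
  · intro t ht k
    have h1 : Measurable[histSA W Y (t - 1)]
        (fun ω => if J < t ∧ window Y J t ω = v then (1 : ℝ) else 0) := by
      by_cases hJ : J < t
      · simp only [hJ, true_and]
        exact (measurable_from_top (f := fun u : Fin J → ℕ => if u = v then (1 : ℝ) else 0)).comp
          ((measurable_window_hist hJ).mono le_rfl (by
            intro s _
            exact (Set.to_countable s).measurableSet))
      · simp only [hJ, false_and, if_false]
        exact measurable_const
    have h2 : Measurable[histSA W Y (t - 1)] (fun ω => (k : ℝ) - Real.exp (W t ω)) :=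
      (h.W_hist ht).exp.const_sub _
    have := h1.mul h2
    convert this using 1
    funext ω
    simp only [patternInc, Pi.mul_apply]
  · intro t ht ω a
    simp only [patternInc]
    rw [tsum_poisson_sq (Real.exp_pos _).le]
    apply ENNReal.ofReal_le_ofReal
    split_ifs with hc
    · have hW := h.W_eq_patternW hc.1 ω (by rw [hc.2]; exact hv)
      rw [hc.2] at hW
      rw [hW]; simp
    · simp [(Real.exp_pos _).le]

/-- The residuals at the times in `badSet` have small total expectation: conditionally on the past
a squared Pearson residual has expectation `1`. -/
lemma GlarmaModel.lintegral_bad (h : GlarmaModel μ Y W β₀ γ₁star) {J : ℕ} (P : Finset (Fin J → ℕ))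
    {δ : ℝ} (hδ : 0 ≤ δ) {t : ℕ} (ht : 1 ≤ t) :
    ∫⁻ ω, (badSet Y P t).indicator (fun ω => ENNReal.ofReal (pearson Y W t ω + δ)) ω ∂μ
      = ENNReal.ofReal (1 + δ) * μ (badSet Y P t) := by
  have hB := measurableSet_badSet_hist (W := W) (Y := Y) P t
  have key := h.lintegral_cond ht (fun k => (badSet Y P t).indicator
    (fun ω => ENNReal.ofReal (((k : ℝ) - Real.exp (W t ω)) ^ 2 / Real.exp (W t ω) + δ)))
    (fun k => ((((h.W_hist ht).exp.const_sub (k : ℝ)).pow_const 2).div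
      (h.W_hist ht).exp |>.add_const δ).ennreal_ofReal.indicator hB)
  have e1 : ∀ ω, (badSet Y P t).indicator (fun ω => ENNReal.ofReal (pearson Y W t ω + δ)) ω
      = (badSet Y P t).indicator (fun ω' => ENNReal.ofReal (((Y t ω : ℝ) - Real.exp (W t ω')) ^ 2
        / Real.exp (W t ω') + δ)) ω := fun ω => rfl
  simp_rw [e1]
  rw [key, ← lintegral_indicator_const (histSA_le h.Ymeas h.Wmeas _ _ hB)]
  refine lintegral_congr fun ω => ?_
  by_cases hω : ω ∈ badSet Y P t
  · simp only [Set.indicator_of_mem hω]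
    refine tsum_ofReal_of_hasSum (Real.exp_pos _).le (fun k => by positivity) ?_
    have hs := ((hasSum_poisson_sq (Real.exp (W t ω)) 0 1).mul_right (Real.exp (W t ω))⁻¹).add
      ((hasSum_poisson0 (Real.exp (W t ω))).mul_right δ)
    have hne := (Real.exp_pos (W t ω)).ne'
    have e : (0 ^ 2 + 1 ^ 2 * Real.exp (W t ω)) * (Real.exp (W t ω))⁻¹ + 1 * δ = 1 + δ := by
      field_simp; ring
    rw [e] at hs
    refine hs.congr_fun fun k => ?_
    rw [div_eq_mul_inv]; ring
  · simp only [Set.indicator_of_notMem hω]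
    simp

/-- Markov's inequality for the bad times. -/
lemma GlarmaModel.bad_small (h : GlarmaModel μ Y W β₀ γ₁star) {J : ℕ} (P : Finset (Fin J → ℕ))
    {δ η : ℝ} (hδ : 0 ≤ δ) (hη : 0 < η)
    (hP : ∀ t, J < t → μ.real {ω | window Y J t ω ∉ P} ≤ η) {b : ℝ} (hb : 0 < b) :
    ∀ᶠ n : ℕ in atTop, μ.real {ω | b * n ≤ ∑ t ∈ Finset.Icc 1 n,
      (badSet Y P t).indicator (fun ω => pearson Y W t ω + δ) ω} ≤ (1 + δ) * (2 * η) / b := by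
  filter_upwards [eventually_ge_atTop 1, eventually_ge_atTop ⌈J / η⌉₊] with n hn1 hn2
  have hn1' : (1 : ℝ) ≤ n := by exact_mod_cast hn1
  have hn2' : (J : ℝ) ≤ n * η := by
    have := Nat.ceil_le.1 hn2
    rwa [div_le_iff₀ hη] at this
  have hBm : ∀ t, MeasurableSet (badSet Y P t) := fun t =>
    histSA_le h.Ymeas h.Wmeas _ _ (measurableSet_badSet_hist (W := W) (Y := Y) P t)
  have hpm : ∀ t, Measurable (pearson Y W t) := fun t => by
    have h1 : Measurable fun ω => (Y t ω : ℝ) :=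
      (measurable_from_top (f := fun k : ℕ => (k : ℝ))).comp (h.Ymeas t)
    exact ((h1.sub (h.Wmeas t).exp).pow_const 2).div (h.Wmeas t).exp
  have hp0 : ∀ t ω, 0 ≤ pearson Y W t ω := fun t ω =>
    div_nonneg (sq_nonneg _) (Real.exp_pos _).le
  let T : Ω → ℝ≥0∞ := fun ω => ∑ t ∈ Finset.Icc 1 n,
    (badSet Y P t).indicator (fun ω => ENNReal.ofReal (pearson Y W t ω + δ)) ω
  have hTm1 : ∀ t, Measurable
      ((badSet Y P t).indicator (fun ω => ENNReal.ofReal (pearson Y W t ω + δ))) := fun t =>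
    ((hpm t).add_const δ).ennreal_ofReal.indicator (hBm t)
  have hTm : Measurable T := Finset.measurable_fun_sum _ fun t _ => hTm1 t
  have hprob : ∑ t ∈ Finset.Icc 1 n, μ.real (badSet Y P t) ≤ n * (2 * η) := by
    have h1 : ∀ t ∈ Finset.Icc 1 n, μ.real (badSet Y P t) ≤ η + if t ≤ J then 1 else 0 := by
      intro t _
      split_ifs with hJ
      · have : μ.real (badSet Y P t) ≤ 1 := measureReal_le_one
        linarith
      · rw [add_zero]
        have e : badSet Y P t = {ω | window Y J t ω ∉ P} := by
          ext ω; simp [badSet, hJ]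
        rw [e]; exact hP t (not_le.1 hJ)
    refine (Finset.sum_le_sum h1).trans ?_
    rw [Finset.sum_add_distrib]
    have h2 : ∑ t ∈ Finset.Icc 1 n, (if t ≤ J then (1 : ℝ) else 0) ≤ J := by
      rw [Finset.sum_boole]
      have : ((Finset.Icc 1 n).filter (· ≤ J)).card ≤ (Finset.Icc 1 J).card :=
        Finset.card_le_card fun t ht => by
          simp only [Finset.mem_filter, Finset.mem_Icc] at ht ⊢
          omega
      rw [Nat.card_Icc] at this
      exact_mod_cast this
    have h3 : ∑ t ∈ Finset.Icc 1 n, η = n * η := by simp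
    linarith
  have hTint : ∫⁻ ω, T ω ∂μ ≤ ENNReal.ofReal ((1 + δ) * (n * (2 * η))) := by
    rw [lintegral_finsetSum _ fun t _ => hTm1 t,
      Finset.sum_congr rfl fun t ht => h.lintegral_bad P hδ (Finset.mem_Icc.1 ht).1,
      ← Finset.mul_sum, ENNReal.ofReal_mul (by linarith)]
    gcongr
    rw [← Finset.sum_congr rfl fun t _ => ofReal_measureReal (μ := μ) (s := badSet Y P t),
      ← ENNReal.ofReal_sum_of_nonneg fun t _ => measureReal_nonneg]
    exact ENNReal.ofReal_le_ofReal hprob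
  have hsub : {ω | b * n ≤ ∑ t ∈ Finset.Icc 1 n,
      (badSet Y P t).indicator (fun ω => pearson Y W t ω + δ) ω}
      ⊆ {ω | ENNReal.ofReal (b * n) ≤ T ω} := by
    intro ω hω
    simp only [Set.mem_ofPred_eq] at hω ⊢
    have e : T ω = ENNReal.ofReal (∑ t ∈ Finset.Icc 1 n,
        (badSet Y P t).indicator (fun ω => pearson Y W t ω + δ) ω) := by
      rw [ENNReal.ofReal_sum_of_nonneg fun t _ =>
        Set.indicator_nonneg (fun ω _ => by have := hp0 t ω; linarith) ω]
      refine Finset.sum_congr rfl fun t _ => ?_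
      by_cases hB : ω ∈ badSet Y P t <;> simp [hB]
    rw [e]
    exact ENNReal.ofReal_le_ofReal hω
  refine (measureReal_mono hsub).trans ?_
  have h1 := (mul_meas_ge_le_lintegral (μ := μ) hTm (ENNReal.ofReal (b * n))).trans hTint
  have h2 := ENNReal.toReal_mono ENNReal.ofReal_ne_top h1
  rw [ENNReal.toReal_mul, ENNReal.toReal_ofReal (by positivity),
    ENNReal.toReal_ofReal (by positivity)] at h2
  rw [le_div_iff₀ hb]
  have hn : (0 : ℝ) < n := by linarith
  refine le_of_mul_le_mul_left ?_ hn
  change b * n * μ.real _ ≤ _ at h2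
  linarith

/-- The initial transient is negligible: almost surely the candidate process for the true parameter
merges with the true latent process at the first zero observation. -/
lemma GlarmaModel.startErr_small (h : GlarmaModel μ Y W β₀ γ₁star) {b : ℝ} (hb : 0 < b) :
    Tendsto (fun n : ℕ => μ {ω | b * n ≤ ∑ t ∈ Finset.Icc 1 n, startErr Y W β₀ γ₁star t ω})
      atTop (𝓝 0) := by
  have hYr : ∀ t, Measurable fun ω => (Y t ω : ℝ) := fun t =>
    (measurable_from_top (f := fun k : ℕ => (k : ℝ))).comp (h.Ymeas t)
  have hwm : ∀ t, Measurable fun ω => glarmaW β₀ γ₁star (fun s => Y s ω) (t + 1) := by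
    intro t
    induction t with
    | zero => exact measurable_const
    | succ t ih =>
      exact ((((hYr (t + 1)).mul ih.neg.exp).sub_const 1).const_mul γ₁star).const_add β₀
  have hsm : ∀ t, Measurable (startErr Y W β₀ γ₁star (t + 1)) := fun t =>
    Measurable.ite (measurableSet_eq_fun (hwm t) (h.Wmeas (t + 1))) measurable_const
      ((((hYr (t + 1)).sub (hwm t).exp).pow_const 2).div (hwm t).exp)
  have hs0 : ∀ t ω, 0 ≤ startErr Y W β₀ γ₁star t ω := by
    intro t ω
    unfold startErr
    split_ifs
    · exact le_rfl
    · exact div_nonneg (sq_nonneg _) (Real.exp_pos _).le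
  have hSm : ∀ n : ℕ, Measurable
      (fun ω => (∑ t ∈ Finset.Icc 1 n, startErr Y W β₀ γ₁star t ω) / n) := fun n =>
    (Finset.measurable_fun_sum _ fun t ht => by
      obtain ⟨r, rfl⟩ : ∃ r, t = r + 1 := ⟨t - 1, by have := (Finset.mem_Icc.1 ht).1; omega⟩
      exact hsm r).div_const _
  have hae : ∀ᵐ ω ∂μ, Tendsto
      (fun n : ℕ => (∑ t ∈ Finset.Icc 1 n, startErr Y W β₀ γ₁star t ω) / n) atTop (𝓝 0) := by
    filter_upwards [h.ae_exists_zero] with ω ⟨s, hs, h0⟩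
    have hz : ∀ t, s < t → startErr Y W β₀ γ₁star t ω = 0 := fun t ht => by
      simp [startErr, h.coupled hs h0 t ht]
    have hlim : Tendsto (fun n : ℕ =>
        (∑ t ∈ Finset.Icc 1 s, startErr Y W β₀ γ₁star t ω) / (n : ℝ)) atTop (𝓝 0) :=
      tendsto_const_div_atTop_nhds_zero_nat _
    refine hlim.congr' ?_
    filter_upwards [eventually_ge_atTop s] with n hn
    congr 1
    refine Finset.sum_subset (Finset.Icc_subset_Icc_right hn) fun t ht ht' => hz t ?_
    simp only [Finset.mem_Icc] at ht ht'
    omega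
  have hmeas := tendstoInMeasure_of_tendsto_ae (fun n => (hSm n).aestronglyMeasurable) hae
  rw [tendstoInMeasure_iff_norm] at hmeas
  refine (hmeas b hb).congr' ?_
  filter_upwards [eventually_gt_atTop 0] with n hn
  have hn' : (0 : ℝ) < n := by exact_mod_cast hn
  congr 1
  ext ω
  simp only [Set.mem_ofPred_eq, sub_zero, Real.norm_eq_abs]
  rw [abs_of_nonneg (div_nonneg (Finset.sum_nonneg fun t _ => hs0 t ω) hn'.le), le_div_iff₀ hn']

/-! ### Comparison of the likelihoods and conclusion -/

omit [IsProbabilityMeasure μ] in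
/-- Bound on one term of `L(γ) - L(γ*)`: a martingale increment when the recent past is one of the
patterns in `P`, minus the divergence `δ` if the preceding observation vanishes, plus
residuals. -/
lemma GlarmaModel.pointwise_bound (h : GlarmaModel μ Y W β₀ γ₁star) {J : ℕ}
    {P : Finset (Fin J → ℕ)} (hP : ∀ v ∈ P, ∃ i, v i = 0) {γ δ : ℝ} (hδ0 : 0 ≤ δ)
    (hδ : δ ≤ Real.exp (β₀ - γ) - Real.exp (β₀ - γ₁star)
      - Real.exp (β₀ - γ₁star) * ((β₀ - γ) - (β₀ - γ₁star)))
    (t : ℕ) (ω : Ω) :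
    ((Y t ω : ℝ) * glarmaW β₀ γ (fun s => Y s ω) t - Real.exp (glarmaW β₀ γ (fun s => Y s ω) t))
      - ((Y t ω : ℝ) * glarmaW β₀ γ₁star (fun s => Y s ω) t
        - Real.exp (glarmaW β₀ γ₁star (fun s => Y s ω) t))
      ≤ ∑ v ∈ P, patternInc Y W v t (Y t ω) ω * (patternW β₀ γ v - patternW β₀ γ₁star v)
        - δ * (if 2 ≤ t ∧ Y (t - 1) ω = 0 then 1 else 0)
        + (badSet Y P t).indicator (fun ω => pearson Y W t ω + δ) ω
        + startErr Y W β₀ γ₁star t ω := by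
  classical
  by_cases hB : ω ∈ badSet Y P t
  · rw [Set.indicator_of_mem hB]
    have hz : ∑ v ∈ P, patternInc Y W v t (Y t ω) ω
        * (patternW β₀ γ v - patternW β₀ γ₁star v) = 0 := by
      refine Finset.sum_eq_zero fun v hv => ?_
      have : ¬ (J < t ∧ window Y J t ω = v) := by
        rintro ⟨h1, h2⟩
        rcases hB with h3 | h3
        · omega
        · exact h3 (h2 ▸ hv)
      simp [patternInc, this]
    rw [hz]
    have h1 := loglik_le_pearson (Nat.cast_nonneg (α := ℝ) (Y t ω))
      (glarmaW β₀ γ (fun s => Y s ω) t) (glarmaW β₀ γ₁star (fun s => Y s ω) t)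
    have h2 : δ * (if 2 ≤ t ∧ Y (t - 1) ω = 0 then 1 else 0) ≤ δ := by
      split_ifs <;> linarith
    have h3 : ((Y t ω : ℝ) - Real.exp (glarmaW β₀ γ₁star (fun s => Y s ω) t)) ^ 2
        / Real.exp (glarmaW β₀ γ₁star (fun s => Y s ω) t)
        ≤ pearson Y W t ω + startErr Y W β₀ γ₁star t ω := by
      unfold startErr pearson
      split_ifs with hc
      · rw [hc, add_zero]
      · have : 0 ≤ ((Y t ω : ℝ) - Real.exp (W t ω)) ^ 2 / Real.exp (W t ω) := by positivity
        linarith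
    linarith
  · rw [Set.indicator_of_notMem hB]
    have hB' : ¬ (t ≤ J ∨ window Y J t ω ∉ P) := hB
    rw [not_or, not_le, not_not] at hB'
    obtain ⟨hJt, hVP⟩ := hB'
    have hv0 := hP _ hVP
    have hw := glarmaW_eq_patternW β₀ γ hJt ω hv0
    have hw' := glarmaW_eq_patternW β₀ γ₁star hJt ω hv0
    have hW := h.W_eq_patternW hJt ω hv0
    have hstart : startErr Y W β₀ γ₁star t ω = 0 := by
      simp [startErr, hw', hW]
    have hsum : ∑ v ∈ P, patternInc Y W v t (Y t ω) ω
        * (patternW β₀ γ v - patternW β₀ γ₁star v)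
        = ((Y t ω : ℝ) - Real.exp (W t ω))
          * (patternW β₀ γ (window Y J t ω) - patternW β₀ γ₁star (window Y J t ω)) := by
      rw [Finset.sum_eq_single (window Y J t ω)]
      · simp [patternInc, hJt]
      · intro v _ hv
        simp [patternInc, Ne.symm hv]
      · intro hn; exact absurd hVP hn
    rw [hsum, hstart, ← hw, ← hw', hW, ← hw']
    have hk := exp_kullback_nonneg (glarmaW β₀ γ (fun s => Y s ω) t)
      (glarmaW β₀ γ₁star (fun s => Y s ω) t)
    split_ifs with hc
    · have e : ∀ g : ℝ, glarmaW β₀ g (fun s => Y s ω) t = β₀ - g := by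
        intro g
        obtain ⟨s, rfl⟩ : ∃ s, t = s + 1 := ⟨t - 1, by omega⟩
        have h0 : Y s ω = 0 := by simpa using hc.2
        rw [glarmaW_succ _ _ _ (by omega), h0]
        simp; ring
      rw [e, e]
      linarith
    · linarith

/-- Strict convexity of `exp` separates `γ*` from the parameters at distance at least `ε`. -/
lemma exists_separation (β₀ γ₁star : ℝ) {Γ : Set ℝ} (hΓ : IsCompact Γ) {ε : ℝ} (hε : 0 < ε) :
    ∃ δ : ℝ, 0 < δ ∧ ∀ γ ∈ Γ, ε ≤ |γ - γ₁star| →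
      δ ≤ Real.exp (β₀ - γ) - Real.exp (β₀ - γ₁star)
        - Real.exp (β₀ - γ₁star) * ((β₀ - γ) - (β₀ - γ₁star)) := by
  have hK : IsCompact (Γ ∩ {γ | ε ≤ |γ - γ₁star|}) :=
    hΓ.inter_right (isClosed_le continuous_const (by fun_prop))
  obtain ⟨δ, hδ, hmin⟩ := hK.exists_forall_le' (a := 0)
    (f := fun γ => Real.exp (β₀ - γ) - Real.exp (β₀ - γ₁star)
        - Real.exp (β₀ - γ₁star) * ((β₀ - γ) - (β₀ - γ₁star))) (by fun_prop) (by
      rintro γ ⟨_, hγ⟩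
      have hγ' : ε ≤ |γ - γ₁star| := hγ
      have hne : γ₁star - γ ≠ 0 := by
        intro h0
        have : γ - γ₁star = 0 := by linarith
        rw [this, abs_zero] at hγ'
        linarith
      have h1 := Real.add_one_lt_exp hne
      have h2 := mul_lt_mul_of_pos_left h1 (Real.exp_pos (β₀ - γ₁star))
      rw [← Real.exp_add] at h2
      have e : β₀ - γ₁star + (γ₁star - γ) = β₀ - γ := by ring
      rw [e] at h2
      linarith)
  exact ⟨δ, hδ, fun γ hγ hd => hmin γ ⟨hγ, hd⟩⟩

lemma exists_pattern_bound (β₀ γ₁star : ℝ) {Γ : Set ℝ} (hΓ : IsCompact Γ) {J : ℕ}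
    (P : Finset (Fin J → ℕ)) :
    ∃ C : ℝ, 0 < C ∧ ∀ v ∈ P, ∀ γ ∈ Γ, |patternW β₀ γ v - patternW β₀ γ₁star v| ≤ C := by
  have hv : ∀ v : Fin J → ℕ, ∃ C : ℝ, ∀ γ ∈ Γ, |patternW β₀ γ v - patternW β₀ γ₁star v| ≤ C := by
    intro v
    obtain ⟨C, hC⟩ := hΓ.exists_bound_of_continuousOn
      (f := fun γ => patternW β₀ γ v - patternW β₀ γ₁star v)
      ((continuous_glarmaIter β₀ _ β₀ J).sub continuous_const).continuousOn
    exact ⟨C, hC⟩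
  choose C hC using hv
  refine ⟨∑ v ∈ P, |C v| + 1, by positivity, fun v hvP γ hγ => ?_⟩
  have h1 := Finset.single_le_sum (f := fun v => |C v|) (fun _ _ => abs_nonneg _) hvP
  have h2 := hC v γ hγ
  have h3 := le_abs_self (C v)
  linarith

/-- Quantitative core: the probability that the maximiser is at distance at least `ε` from `γ*`
is eventually at most `4ρ`, for every `ρ > 0`. -/
lemma GlarmaModel.far_small (h : GlarmaModel μ Y W β₀ γ₁star) {Γ : Set ℝ} (hΓ : IsCompact Γ)
    (hγ0 : γ₁star ≠ 0) (hγmem : γ₁star ∈ Γ) (γhat : ℕ → Ω → ℝ)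
    (hargmax : ∀ n ω, γhat n ω ∈ Γ ∧
      ∀ γ₁ ∈ Γ, glarmaL β₀ γ₁ (fun s => Y s ω) n ≤ glarmaL β₀ (γhat n ω) (fun s => Y s ω) n)
    {ε : ℝ} (hε : 0 < ε) {ρ : ℝ} (hρ : 0 < ρ) :
    ∀ᶠ n : ℕ in atTop, μ.real {ω | ε ≤ |γhat n ω - γ₁star|} ≤ 4 * ρ := by
  obtain ⟨δ, hδ, hsep⟩ := exists_separation β₀ γ₁star hΓ hε
  obtain ⟨c, hc, hfreq⟩ := h.zero_freq hρ
  -- `b n` is a third of the loss `δ c n` accumulated after zero observations; `η` makes the bad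
  -- times contribute at least `b n` with probability at most `ρ`
  set b := δ * c / 3 with hbdef
  have hb : 0 < b := by positivity
  set η := ρ * b / (2 * (1 + δ)) with hηdef
  have hη : 0 < η := by positivity
  obtain ⟨J, P, hP0, hPη⟩ := h.exists_patterns hγ0 hη
  obtain ⟨C, hC, hCb⟩ := exists_pattern_bound β₀ γ₁star hΓ P
  have hbad := h.bad_small P hδ.le hη hPη hb
  have hηb : (1 + δ) * (2 * η) / b = ρ := by
    rw [hηdef]; field_simp
  rw [hηb] at hbad
  set d := b / (C * (P.card + 1)) with hddef
  have hd : 0 < d := by positivity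
  have hpat : ∀ᶠ n : ℕ in atTop, ∑ v ∈ P,
      μ.real {ω | d * n ≤ |∑ t ∈ Finset.Icc 1 n, patternInc Y W v t (Y t ω) ω|} < ρ := by
    have hl : Tendsto (fun n : ℕ => ∑ v ∈ P,
        μ.real {ω | d * n ≤ |∑ t ∈ Finset.Icc 1 n, patternInc Y W v t (Y t ω) ω|}) atTop
        (𝓝 (∑ v ∈ P, 0)) := by
      refine tendsto_finsetSum _ fun v hv => ?_
      have := (ENNReal.tendsto_toReal (by simp : (0 : ℝ≥0∞) ≠ ⊤)).comp
        (h.patternInc_wlln (hP0 v hv) hd)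
      rw [ENNReal.toReal_zero] at this
      exact this
    rw [Finset.sum_const_zero] at hl
    exact hl.eventually (gt_mem_nhds hρ)
  have hstart : ∀ᶠ n : ℕ in atTop,
      μ.real {ω | b * n ≤ ∑ t ∈ Finset.Icc 1 n, startErr Y W β₀ γ₁star t ω} < ρ := by
    have := (ENNReal.tendsto_toReal (by simp : (0 : ℝ≥0∞) ≠ ⊤)).comp (h.startErr_small hb)
    rw [ENNReal.toReal_zero] at this
    exact this.eventually (gt_mem_nhds hρ)
  filter_upwards [hfreq, hbad, hpat, hstart, eventually_gt_atTop 0] with n h1 h2 h3 h4 hn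
  have hn' : (0 : ℝ) < n := by exact_mod_cast hn
  have hsub : {ω | ε ≤ |γhat n ω - γ₁star|} ⊆
      (({ω | ∑ t ∈ Finset.Icc 1 n, (if 2 ≤ t ∧ Y (t - 1) ω = 0 then (1 : ℝ) else 0) < c * n}
        ∪ {ω | b * n ≤ ∑ t ∈ Finset.Icc 1 n,
            (badSet Y P t).indicator (fun ω => pearson Y W t ω + δ) ω})
        ∪ ⋃ v ∈ P, {ω | d * n ≤ |∑ t ∈ Finset.Icc 1 n, patternInc Y W v t (Y t ω) ω|})
        ∪ {ω | b * n ≤ ∑ t ∈ Finset.Icc 1 n, startErr Y W β₀ γ₁star t ω} := by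
    intro ω hω
    by_contra hcon
    simp only [Set.mem_union, Set.mem_iUnion, Set.mem_ofPred_eq, not_or, not_exists, not_le,
      not_lt] at hcon hω
    obtain ⟨⟨⟨g1, g2⟩, g3⟩, g4⟩ := hcon
    obtain ⟨hmem, hmax⟩ := hargmax n ω
    have hL := hmax γ₁star hγmem
    have hδ' := hsep _ hmem hω
    have hsum := Finset.sum_le_sum (s := Finset.Icc 1 n) fun t _ =>
      h.pointwise_bound hP0 hδ.le hδ' t ω
    have hL' : 0 ≤ ∑ t ∈ Finset.Icc 1 n,
        (((Y t ω : ℝ) * glarmaW β₀ (γhat n ω) (fun s => Y s ω) t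
            - Real.exp (glarmaW β₀ (γhat n ω) (fun s => Y s ω) t))
          - ((Y t ω : ℝ) * glarmaW β₀ γ₁star (fun s => Y s ω) t
            - Real.exp (glarmaW β₀ γ₁star (fun s => Y s ω) t))) := by
      rw [Finset.sum_sub_distrib, sub_nonneg]
      exact hL
    have hR := hL'.trans hsum
    rw [Finset.sum_add_distrib, Finset.sum_add_distrib, Finset.sum_sub_distrib,
      ← Finset.mul_sum, Finset.sum_comm] at hR
    have hmart : ∑ v ∈ P, ∑ t ∈ Finset.Icc 1 n, patternInc Y W v t (Y t ω) ω
        * (patternW β₀ (γhat n ω) v - patternW β₀ γ₁star v) ≤ b * n := by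
      calc _ ≤ ∑ v ∈ P, d * n * C := by
            refine Finset.sum_le_sum fun v hv => ?_
            rw [← Finset.sum_mul]
            refine (le_abs_self _).trans ?_
            rw [abs_mul]
            exact mul_le_mul (g3 v hv).le (hCb v hv _ hmem) (abs_nonneg _) (by positivity)
        _ = P.card * (d * n * C) := by rw [Finset.sum_const, nsmul_eq_mul]
        _ ≤ (P.card + 1) * (d * n * C) := by gcongr; linarith
        _ = b * n := by rw [hddef]; field_simp
    have h5 := mul_le_mul_of_nonneg_left g1 hδ.le
    have h6 : δ * (c * n) = 3 * (b * n) := by rw [hbdef]; ring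
    linarith
  refine (measureReal_mono hsub).trans ?_
  refine (measureReal_union_le _ _).trans ?_
  have u1 := measureReal_union_le (μ := μ)
    ({ω | ∑ t ∈ Finset.Icc 1 n, (if 2 ≤ t ∧ Y (t - 1) ω = 0 then (1 : ℝ) else 0) < c * n}
        ∪ {ω | b * n ≤ ∑ t ∈ Finset.Icc 1 n,
            (badSet Y P t).indicator (fun ω => pearson Y W t ω + δ) ω})
    (⋃ v ∈ P, {ω | d * n ≤ |∑ t ∈ Finset.Icc 1 n, patternInc Y W v t (Y t ω) ω|})
  have u2 := measureReal_union_le (μ := μ)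
    {ω | ∑ t ∈ Finset.Icc 1 n, (if 2 ≤ t ∧ Y (t - 1) ω = 0 then (1 : ℝ) else 0) < c * n}
    {ω | b * n ≤ ∑ t ∈ Finset.Icc 1 n,
            (badSet Y P t).indicator (fun ω => pearson Y W t ω + δ) ω}
  have u3 := measureReal_biUnion_finset_le (μ := μ) P
    fun v => {ω | d * n ≤ |∑ t ∈ Finset.Icc 1 n, patternInc Y W v t (Y t ω) ω|}
  linarith

end Model

/-- Theorem 1 of the paper: consistency of the estimator
`γ̂₁ = argmax_{γ₁ ∈ Γ} L(β₀*, γ₁)` in the Poisson GLARMA model without covariates and with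
`q = 1`: `γ̂₁ → γ₁*` in probability as `n → ∞`. -/
theorem glarma_gamma1_consistency
    {Ω : Type*} [MeasurableSpace Ω] (μ : Measure Ω) [IsProbabilityMeasure μ]
    (Y : ℕ → Ω → ℕ) (W : ℕ → Ω → ℝ) (β₀ γ₁star : ℝ) (Γ : Set ℝ)
    (hΓcompact : IsCompact Γ) (hΓzero : 0 ∉ Γ) (hγmem : γ₁star ∈ Γ)
    (hYmeas : ∀ t, Measurable (Y t)) (hWmeas : ∀ t, Measurable (W t))
    -- the latent GLARMA recursion `W_t = β₀ + γ₁* E*_{t-1}` with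
    -- `E*_{t-1} = Y_{t-1} exp (-W_{t-1}) - 1` for `t ≥ 2`
    (hrec : ∀ t, 2 ≤ t → ∀ ω,
      W t ω = β₀ + γ₁star * ((Y (t - 1) ω : ℝ) * Real.exp (-(W (t - 1) ω)) - 1))
    -- conditionally on the past history, `Y_t ∼ Poisson (exp W_t)`
    (hpois : ∀ t, 1 ≤ t → ∀ k : ℕ,
      (μ[(fun ω => if Y t ω = k then (1 : ℝ) else 0) | histSA W Y (t - 1)])
        =ᵐ[μ] fun ω => poissonP (Real.exp (W t ω)) k)
    -- `(W_t)` is started with its stationary invariant distribution, hence is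
    -- strictly stationary: the law of `(W_t, …, W_{t+n-1})` does not depend on `t ≥ 1`
    (hstat : ∀ n t : ℕ, 1 ≤ t →
      Measure.map (fun ω => fun i : Fin n => W (t + (i : ℕ)) ω) μ
        = Measure.map (fun ω => fun i : Fin n => W (1 + (i : ℕ)) ω) μ)
    -- `γ̂₁(n)` maximizes `γ₁ ↦ L(β₀*, γ₁)` over `Γ`, based on `Y_1, …, Y_n`
    (γhat : ℕ → Ω → ℝ) (hγhatMeas : ∀ n, Measurable (γhat n))
    (hargmax : ∀ n ω, γhat n ω ∈ Γ ∧
      ∀ γ₁ ∈ Γ, glarmaL β₀ γ₁ (fun s => Y s ω) n ≤ glarmaL β₀ (γhat n ω) (fun s => Y s ω) n) :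
    TendstoInMeasure μ γhat atTop fun _ => γ₁star := by
  have h : GlarmaModel μ Y W β₀ γ₁star := ⟨hYmeas, hWmeas, hrec, hpois, hstat⟩
  have hγ0 : γ₁star ≠ 0 := fun h0 => hΓzero (h0 ▸ hγmem)
  rw [tendstoInMeasure_iff_norm]
  intro ε hε
  have hreal : Tendsto (fun n : ℕ => μ.real {ω | ε ≤ ‖γhat n ω - γ₁star‖}) atTop (nhds 0) := by
    rw [Metric.tendsto_nhds]
    intro ρ hρ
    filter_upwards [h.far_small hΓcompact hγ0 hγmem γhat hargmax hε
      (show (0 : ℝ) < ρ / 8 by positivity)] with n hn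
    rw [Real.dist_eq, sub_zero, abs_of_nonneg measureReal_nonneg]
    simp only [Real.norm_eq_abs]
    linarith
  have := ENNReal.tendsto_ofReal hreal
  simpa using this
end
end

section
/- In the Poisson GLARMA model without covariates and with q=1, the latent process satisfies the recursion W_t* = (β₀* − γ₁*) + γ₁* Y_{t−1} exp(−W_{t−1}*); consequently σ(Y_s, s ≤ t−2) = σ(W_s*, s ≤ t−1), and the conditional distribution of W_t* given σ(W_s*, s ≤ t−1) coincides with its conditional distribution given W_{t−1}* alone, i.e., (W_t*) has the Markov property. -/
/-!
The recursion `W_t = (β₀ - γ) + γ Y_{t-1} exp (-W_{t-1})` is a rearrangement of the definition.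
It expresses `W_t` through `(W_{t-1}, Y_{t-1})` and, because `γ ≠ 0`, it can be solved for
`Y_{t-1} = (W_t - β₀ + γ) / γ * exp W_{t-1}`; hence the history of `Y` (with `W_1`) and the history
of `W` generate the same σ-algebra (`measurable_W_histSA`, `measurable_Y_sigmaW`).

For the Markov property put `V = W_{t-1}`, `N = Y_{t-1}`, `m = σ(W_1, …, W_{t-1})`.  The event
`{W_t ∈ B}` is the disjoint union over `k` of `{g k V ∈ B} ∩ {N = k}`, where `g k` is measurable.
The first factor is `m`-measurable, so it comes out of the conditional expectation and
`P(g k V ∈ B, N = k | m) = 1_{g k V ∈ B} P(N = k | m)` is a function of `V` by the Poisson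
hypothesis; by the tower property it is also the conditional expectation given `σ(V)`
(`condExp_eq_of_coarser_meas`).  Finite sums over `k` inherit the equality of the two conditional
expectations, and dominated convergence in `L¹` passes it on to the full sum
(`condExp_eq_of_tendsto`).
-/

open MeasureTheory ProbabilityTheory Filter Matrix
open scoped ENNReal

noncomputable section

/-- If a conditional expectation given `m` is measurable for a coarser `m'`, then it is also the
conditional expectation given `m'`. -/
theorem condExp_eq_of_coarser_meas {Ω : Type*} {m' m m0 : MeasurableSpace Ω} {μ : Measure Ω}
    [IsProbabilityMeasure μ] (hm' : m' ≤ m) (hm : m ≤ m0) {f q : Ω → ℝ}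
    (hq : StronglyMeasurable[m'] q) (hfq : μ[f | m] =ᵐ[μ] q) :
    μ[f | m] =ᵐ[μ] μ[f | m'] := by
  have hqi : Integrable q μ := integrable_condExp.congr hfq
  have h1 : μ[μ[f | m] | m'] =ᵐ[μ] μ[f | m'] := condExp_condExp_of_le hm' hm
  have h2 : μ[μ[f | m] | m'] =ᵐ[μ] μ[q | m'] := condExp_congr_ae hfq
  rw [condExp_of_stronglyMeasurable (hm'.trans hm) hq hqi] at h2
  exact hfq.trans (h2.symm.trans h1)

/-- Equality of the conditional expectations given two σ-algebras passes to dominated limits. -/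
theorem condExp_eq_of_tendsto {Ω : Type*} {m' m m0 : MeasurableSpace Ω} {μ : Measure Ω}
    [IsProbabilityMeasure μ] (hm' : m' ≤ m0) (hm : m ≤ m0) {F : ℕ → Ω → ℝ} {f : Ω → ℝ}
    (hF : ∀ n, Measurable (F n)) (hb : ∀ n ω, ‖F n ω‖ ≤ 1)
    (hlim : ∀ ω, Tendsto (fun n => F n ω) atTop (nhds (f ω)))
    (h : ∀ n, μ[F n | m] =ᵐ[μ] μ[F n | m']) :
    μ[f | m] =ᵐ[μ] μ[f | m'] := by
  have key : ∀ m₁ : MeasurableSpace Ω, ∀ h₁ : m₁ ≤ m0,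
      Tendsto (fun n => condExpL1 h₁ μ (F n)) atTop (nhds (condExpL1 h₁ μ f)) := fun m₁ h₁ =>
    tendsto_condExpL1_of_dominated_convergence h₁ (fun _ => (1 : ℝ))
      (fun n => (hF n).aestronglyMeasurable) (integrable_const _)
      (fun n => Eventually.of_forall (hb n)) (Eventually.of_forall hlim)
  have heq : ∀ n, condExpL1 hm μ (F n) = condExpL1 hm' μ (F n) := fun n => by
    apply Lp.ext
    exact (condExp_ae_eq_condExpL1 hm _).symm.trans
      ((h n).trans (condExp_ae_eq_condExpL1 hm' _))
  have hl : condExpL1 hm μ f = condExpL1 hm' μ f := by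
    refine tendsto_nhds_unique (key m hm) ?_
    simp_rw [heq]
    exact key m' hm'
  refine (condExp_ae_eq_condExpL1 hm f).trans ?_
  rw [hl]
  exact (condExp_ae_eq_condExpL1 hm' f).symm

/-- If `V` is `m`-measurable and the conditional law of `N` given `m` is a function of `V`, then
conditionally on `m` the law of `G N V` depends on `V` only. -/
theorem condExp_indicator_eq_comap {Ω : Type*} {m m0 : MeasurableSpace Ω} {μ : Measure Ω}
    [IsProbabilityMeasure μ] (hm : m ≤ m0) {N : Ω → ℕ} {V U : Ω → ℝ} (hN : Measurable N)
    (hV : Measurable[m] V) {p : ℕ → ℝ → ℝ} (hp : ∀ k, Measurable (p k))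
    {g : ℕ → ℝ → ℝ} (hg : ∀ k, Measurable (g k)) (hU : ∀ ω, U ω = g (N ω) (V ω))
    (hlaw : ∀ k, (μ[(fun ω => if N ω = k then (1 : ℝ) else 0) | m]) =ᵐ[μ] fun ω => p k (V ω))
    {B : Set ℝ} (hB : MeasurableSet B) :
    (μ[(U ⁻¹' B).indicator (fun _ => (1 : ℝ)) | m]) =ᵐ[μ]
      (μ[(U ⁻¹' B).indicator (fun _ => (1 : ℝ)) | MeasurableSpace.comap V inferInstance]) := by
  have hVm : MeasurableSpace.comap V inferInstance ≤ m := hV.comap_le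
  have hVm0 : Measurable V := hV.mono hm le_rfl
  -- `a k ∘ V` is the indicator of `{g k V ∈ B}`
  let a : ℕ → ℝ → ℝ := fun k => (g k ⁻¹' B).indicator (fun _ => (1 : ℝ))
  let e : ℕ → Ω → ℝ := fun k ω => if N ω = k then (1 : ℝ) else 0
  have ha : ∀ k, Measurable (a k) := fun k => measurable_const.indicator (hg k hB)
  have he : ∀ k, Measurable (e k) := fun k =>
    Measurable.ite (hN (measurableSet_singleton k)) measurable_const measurable_const
  have ha1 : ∀ k x, ‖a k x‖ ≤ 1 := fun k x => by
    by_cases hx : x ∈ g k ⁻¹' B <;> simp [a, hx]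
  have he1 : ∀ k ω, ‖e k ω‖ ≤ 1 := fun k ω => by
    by_cases hx : N ω = k <;> simp [e, hx]
  have hei : ∀ k, Integrable (e k) μ := fun k =>
    Integrable.of_bound (he k).aestronglyMeasurable 1 (Eventually.of_forall (he1 k))
  let f : ℕ → Ω → ℝ := fun k => (fun ω => a k (V ω)) * e k
  have hf : ∀ k, Measurable (f k) := fun k => ((ha k).comp hVm0).mul (he k)
  have hfi : ∀ k, Integrable (f k) μ := fun k =>
    Integrable.of_bound (hf k).aestronglyMeasurable 1 (Eventually.of_forall fun ω => by
      simpa [f] using mul_le_one₀ (ha1 k (V ω)) (norm_nonneg _) (he1 k ω))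
  have hterm : ∀ k, μ[f k | m] =ᵐ[μ] μ[f k | MeasurableSpace.comap V inferInstance] := by
    intro k
    refine condExp_eq_of_coarser_meas hVm hm (q := fun ω => a k (V ω) * p k (V ω)) ?_ ?_
    · exact (((ha k).mul (hp k)).comp (comap_measurable V)).stronglyMeasurable
    · refine (condExp_mul_of_stronglyMeasurable_left
        ((ha k).comp hV).stronglyMeasurable (hfi k) (hei k)).trans ?_
      filter_upwards [hlaw k] with ω hω
      rw [Pi.mul_apply, ← hω]
      rfl
  -- at most one term of the sum, the one with index `N ω`, is non-zero
  have hsum : ∀ n ω, (∑ k ∈ Finset.range n, f k) ω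
      = if N ω < n then (U ⁻¹' B).indicator (fun _ => (1 : ℝ)) ω else 0 := by
    intro n ω
    have hUa : (U ⁻¹' B).indicator (fun _ => (1 : ℝ)) ω = a (N ω) (V ω) := by
      by_cases h : g (N ω) (V ω) ∈ B <;> simp [a, Set.indicator, hU, h]
    simp [hUa, f, e, Finset.sum_apply]
  refine condExp_eq_of_tendsto (F := fun n => ∑ k ∈ Finset.range n, f k)
    (hVm.trans hm) hm ?_ ?_ ?_ ?_
  · intro n
    rw [Finset.sum_fn]
    exact Finset.measurable_sum _ fun k _ => hf k
  · intro n ω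
    rw [hsum]
    by_cases h : N ω < n <;> by_cases h' : U ω ∈ B <;> simp [Set.indicator, h, h']
  · intro ω
    refine tendsto_const_nhds.congr' ?_
    filter_upwards [eventually_gt_atTop (N ω)] with n hn
    rw [hsum, if_pos hn]
  · intro n
    refine (condExp_finsetSum (fun k _ => hfi k) m).trans
      (EventuallyEq.trans ?_ (condExp_finsetSum (fun k _ => hfi k) _).symm)
    exact eventuallyEq_sum fun k _ => hterm k

theorem measurable_W_sigmaW {Ω : Type*} (W : ℕ → Ω → ℝ) {s t : ℕ} (hs : 1 ≤ s) (hst : s ≤ t) :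
    Measurable[sigmaW W t] (W s) :=
  (comap_measurable (W s)).mono
    (le_iSup₂_of_le (f := fun s (_ : s ∈ Finset.Icc 1 t) =>
      MeasurableSpace.comap (W s) inferInstance) s (Finset.mem_Icc.2 ⟨hs, hst⟩) le_rfl) le_rfl

theorem measurable_Y_histSA {Ω : Type*} (W : ℕ → Ω → ℝ) (Y : ℕ → Ω → ℕ) {s t : ℕ} (hs : 1 ≤ s)
    (hst : s ≤ t) : Measurable[histSA W Y t] (Y s) :=
  (comap_measurable (Y s)).mono
    (le_sup_of_le_right (le_iSup₂_of_le (f := fun s (_ : s ∈ Finset.Icc 1 t) =>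
      MeasurableSpace.comap (Y s) ⊤) s (Finset.mem_Icc.2 ⟨hs, hst⟩) le_rfl)) le_rfl

/-- By induction along the recursion, the history up to time `t` determines
`W_1, …, W_{t+1}`. -/
theorem measurable_W_histSA {Ω : Type*} {W : ℕ → Ω → ℝ} {Y : ℕ → Ω → ℕ} {β γ : ℝ}
    (hrec : ∀ s, 1 ≤ s → ∀ ω, W (s + 1) ω = (β - γ) + γ * (Y s ω : ℝ) * Real.exp (-(W s ω)))
    {s t : ℕ} (hs : 1 ≤ s) (hst : s ≤ t + 1) : Measurable[histSA W Y t] (W s) := by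
  induction s, hs using Nat.le_induction with
  | base => exact (comap_measurable (W 1)).mono le_sup_left le_rfl
  | succ s hs ih =>
    have hW := ih (by omega)
    have hY : Measurable[histSA W Y t] fun ω => (Y s ω : ℝ) :=
      (measurable_of_countable (fun k : ℕ => (k : ℝ))).comp
        (measurable_Y_histSA W Y hs (by omega))
    rw [funext (hrec s hs)]
    exact ((hY.const_mul γ).mul (Real.measurable_exp.comp hW.neg)).const_add (β - γ)

/-- For `γ ≠ 0` the recursion can be solved for `Y_s` in terms of `W_s` and `W_{s+1}`. -/
theorem measurable_Y_sigmaW {Ω : Type*} {W : ℕ → Ω → ℝ} {Y : ℕ → Ω → ℕ} {β γ : ℝ} (hγ : γ ≠ 0)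
    (hrec : ∀ s, 1 ≤ s → ∀ ω, W (s + 1) ω = (β - γ) + γ * (Y s ω : ℝ) * Real.exp (-(W s ω)))
    {s t : ℕ} (hs : 1 ≤ s) (hst : s + 1 ≤ t) : Measurable[sigmaW W t] (Y s) := by
  have hW := measurable_W_sigmaW W hs (show s ≤ t by omega)
  have hW' := measurable_W_sigmaW W (show 1 ≤ s + 1 by omega) hst
  have hY : Y s = fun ω => ⌊(W (s + 1) ω - (β - γ)) / γ * Real.exp (W s ω)⌋₊ := by
    funext ω
    have h : (W (s + 1) ω - (β - γ)) / γ * Real.exp (W s ω) = (Y s ω : ℝ) := by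
      rw [hrec s hs, Real.exp_neg]
      have := Real.exp_ne_zero (W s ω)
      field_simp
      ring
    rw [h, Nat.floor_natCast]
  rw [hY]
  exact Nat.measurable_floor.comp
    (((hW'.sub_const (β - γ)).div_const γ).mul (Real.measurable_exp.comp hW))

theorem histSA_eq_sigmaW {Ω : Type*} {W : ℕ → Ω → ℝ} {Y : ℕ → Ω → ℕ} {β γ : ℝ} (hγ : γ ≠ 0)
    (hrec : ∀ s, 1 ≤ s → ∀ ω, W (s + 1) ω = (β - γ) + γ * (Y s ω : ℝ) * Real.exp (-(W s ω)))
    (t : ℕ) : histSA W Y t = sigmaW W (t + 1) := by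
  apply le_antisymm
  · refine sup_le (measurable_W_sigmaW W le_rfl (by omega)).comap_le (iSup₂_le fun s hs => ?_)
    obtain ⟨h1, h2⟩ := Finset.mem_Icc.1 hs
    exact (measurable_Y_sigmaW hγ hrec h1 (by omega)).comap_le
  · refine iSup₂_le fun s hs => ?_
    obtain ⟨h1, h2⟩ := Finset.mem_Icc.1 hs
    exact (measurable_W_histSA hrec h1 h2).comap_le

/-- the latent process satisfies the recursion
`W_t* = (β₀* - γ₁*) + γ₁* Y_{t-1} exp (-W_{t-1}*)` for `t ≥ 2`; consequently
`σ(W_1*, Y_s, s ≤ t-2) = σ(W_s*, s ≤ t-1)`, and the conditional distribution of `W_t*` given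
`σ(W_s*, s ≤ t-1)` coincides with its conditional distribution given `W_{t-1}*` alone, i.e.
`(W_t*)` has the Markov property. -/
theorem glarma_latent_markov
    {Ω : Type*} [MeasurableSpace Ω] (μ : Measure Ω) [IsProbabilityMeasure μ]
    (Y : ℕ → Ω → ℕ) (W : ℕ → Ω → ℝ) (β₀ γ₁star : ℝ) (Γ : Set ℝ)
    (hΓcompact : IsCompact Γ) (hΓzero : 0 ∉ Γ) (hγmem : γ₁star ∈ Γ)
    (hYmeas : ∀ t, Measurable (Y t)) (hWmeas : ∀ t, Measurable (W t))
    -- the latent GLARMA recursion `W_t = β₀ + γ₁* E*_{t-1}` with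
    -- `E*_{t-1} = Y_{t-1} exp (-W_{t-1}) - 1` for `t ≥ 2`
    (hrec : ∀ t, 2 ≤ t → ∀ ω,
      W t ω = β₀ + γ₁star * ((Y (t - 1) ω : ℝ) * Real.exp (-(W (t - 1) ω)) - 1))
    -- conditionally on the past history, `Y_t ∼ Poisson (exp W_t)`
    (hpois : ∀ t, 1 ≤ t → ∀ k : ℕ,
      (μ[(fun ω => if Y t ω = k then (1 : ℝ) else 0) | histSA W Y (t - 1)])
        =ᵐ[μ] fun ω => poissonP (Real.exp (W t ω)) k) :
    (∀ t, 2 ≤ t → ∀ ω,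
      W t ω = (β₀ - γ₁star) + γ₁star * (Y (t - 1) ω : ℝ) * Real.exp (-(W (t - 1) ω))) ∧
    (∀ t, 2 ≤ t → histSA W Y (t - 2) = sigmaW W (t - 1)) ∧
    (∀ t, 2 ≤ t → ∀ B : Set ℝ, MeasurableSet B →
      (μ[(W t ⁻¹' B).indicator (fun _ => (1 : ℝ)) | sigmaW W (t - 1)])
        =ᵐ[μ]
      (μ[(W t ⁻¹' B).indicator (fun _ => (1 : ℝ)) |
          MeasurableSpace.comap (W (t - 1)) inferInstance])) := by
  have hγ : γ₁star ≠ 0 := fun h => hΓzero (h ▸ hγmem)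
  have hrec' : ∀ s, 1 ≤ s → ∀ ω,
      W (s + 1) ω = (β₀ - γ₁star) + γ₁star * (Y s ω : ℝ) * Real.exp (-(W s ω)) := by
    intro s hs ω
    rw [hrec (s + 1) (by omega) ω, Nat.add_sub_cancel]
    ring
  refine ⟨fun t ht ω => ?_, fun t ht => ?_, fun t ht B hB => ?_⟩
  · rw [hrec t ht ω]
    ring
  · obtain ⟨n, rfl⟩ := Nat.exists_eq_add_of_le' ht
    exact histSA_eq_sigmaW hγ hrec' n
  · obtain ⟨n, rfl⟩ := Nat.exists_eq_add_of_le' ht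
    change (μ[_ | sigmaW W (n + 1)]) =ᵐ[μ] (μ[_ | MeasurableSpace.comap (W (n + 1)) _])
    refine condExp_indicator_eq_comap (N := Y (n + 1)) (p := fun k x => poissonP (Real.exp x) k)
      (g := fun k x => (β₀ - γ₁star) + γ₁star * (k : ℝ) * Real.exp (-x))
      (iSup₂_le fun s _ => (hWmeas s).comap_le) (hYmeas _)
      (measurable_W_sigmaW W (by omega) le_rfl) (fun k => ?_) (fun k => by fun_prop)
      (hrec' (n + 1) (by omega)) (fun k => ?_) hB
    · unfold poissonP
      fun_prop
    · have h := hpois (n + 1) (by omega) k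
      rwa [Nat.add_sub_cancel, histSA_eq_sigmaW hγ hrec' n] at h
end
end

section
/- In the Poisson GLARMA model without covariates and with q=1, for every δ > 0 and every t ≥ 2 there exists a measurable function F (depending only on δ, β₀* and Γ) such that for all γ₁, γ₂ ∈ Γ with |γ₁ − γ₂| ≤ δ, the pointwise bound |W_t(β₀*, γ₁) − W_t(β₀*, γ₂)| ≤ δ · F(Y_{t−1}, Y_{t−2}, ..., Y_1) holds. -/
/-!
The recursion `W_{t+2} = β₀ + γ₁ (Y_{t+1} exp (-W_{t+1}) - 1)` is locally Lipschitz in `γ₁`. Let `K`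
bound `|γ|` on the compact set `Γ`. Then `|W_t|` is at most some `B_t` built from `K` and the past
observations, so `exp` is Lipschitz with constant `exp B_{t+1}` at the arguments that occur
(`abs_exp_sub_exp_le`). Writing the increment at time `t + 2` as
`(γ₁ - γ₂) E_{t+1}(γ₁) + γ₂ Y_{t+1} (exp (-W_{t+1}(γ₁)) - exp (-W_{t+1}(γ₂)))`
gives `|W_t(γ₁) - W_t(γ₂)| ≤ |γ₁ - γ₂| F_t` by induction (`abs_glarmaW_sub_le`), with `F_t` defined
by a recursion of the same shape. In particular `F_t` does not depend on `δ`.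
-/

open MeasureTheory ProbabilityTheory Filter Matrix
open scoped ENNReal

noncomputable section

/-- The bound `B_t` on `|W_t(β₀, γ)|`, valid whenever `|γ| ≤ K`. -/
def glarmaBound (β₀ K : ℝ) (Y : ℕ → ℕ) : ℕ → ℝ
  | 0 => |β₀|
  | 1 => |β₀|
  | t + 2 => |β₀| + K * ((Y (t + 1) : ℝ) * Real.exp (glarmaBound β₀ K Y (t + 1)) + 1)

/-- The Lipschitz constant `F_t` of `γ ↦ W_t(β₀, γ)` on `[-K, K]`, as a function of the
observations. -/
def glarmaLip (β₀ K : ℝ) (Y : ℕ → ℕ) : ℕ → ℝ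
  | 0 => 0
  | 1 => 0
  | t + 2 => (Y (t + 1) : ℝ) * Real.exp (glarmaBound β₀ K Y (t + 1)) + 1 +
      K * ((Y (t + 1) : ℝ) *
        (Real.exp (glarmaBound β₀ K Y (t + 1)) * glarmaLip β₀ K Y (t + 1)))

lemma measurable_glarmaBound (β₀ K : ℝ) :
    ∀ t, Measurable fun Y : ℕ → ℕ => glarmaBound β₀ K Y t
  | 0 => by simp only [glarmaBound]; fun_prop
  | 1 => by simp only [glarmaBound]; fun_prop
  | t + 2 => by
    have ih := measurable_glarmaBound β₀ K (t + 1)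
    simp only [glarmaBound]
    fun_prop

lemma measurable_glarmaLip (β₀ K : ℝ) :
    ∀ t, Measurable fun Y : ℕ → ℕ => glarmaLip β₀ K Y t
  | 0 => by simp only [glarmaLip]; fun_prop
  | 1 => by simp only [glarmaLip]; fun_prop
  | t + 2 => by
    have ih := measurable_glarmaLip β₀ K (t + 1)
    have hB := measurable_glarmaBound β₀ K (t + 1)
    simp only [glarmaLip]
    fun_prop

lemma glarmaBound_congr (β₀ K : ℝ) (Y Y' : ℕ → ℕ) :
    ∀ t, (∀ s, 1 ≤ s → s ≤ t - 1 → Y s = Y' s) → glarmaBound β₀ K Y t = glarmaBound β₀ K Y' t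
  | 0, _ => rfl
  | 1, _ => rfl
  | t + 2, h => by
    have ih := glarmaBound_congr β₀ K Y Y' (t + 1) fun s h1 h2 => h s h1 (by omega)
    simp only [glarmaBound, ih, h (t + 1) (by omega) (by omega)]

lemma glarmaLip_congr (β₀ K : ℝ) (Y Y' : ℕ → ℕ) :
    ∀ t, (∀ s, 1 ≤ s → s ≤ t - 1 → Y s = Y' s) → glarmaLip β₀ K Y t = glarmaLip β₀ K Y' t
  | 0, _ => rfl
  | 1, _ => rfl
  | t + 2, h => by
    have ih := glarmaLip_congr β₀ K Y Y' (t + 1) fun s h1 h2 => h s h1 (by omega)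
    have hB := glarmaBound_congr β₀ K Y Y' (t + 1) fun s h1 h2 => h s h1 (by omega)
    simp only [glarmaLip, ih, hB, h (t + 1) (by omega) (by omega)]

lemma abs_exp_sub_exp_le {a b B : ℝ} (ha : a ≤ B) (hb : b ≤ B) :
    |Real.exp a - Real.exp b| ≤ Real.exp B * |a - b| := by
  wlog hab : b ≤ a generalizing a b
  · rw [abs_sub_comm, abs_sub_comm a b]
    exact this hb ha (le_of_not_ge hab)
  rw [abs_of_nonneg (sub_nonneg.2 (Real.exp_le_exp.2 hab)), abs_of_nonneg (sub_nonneg.2 hab)]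
  calc Real.exp a - Real.exp b = Real.exp a * (1 - Real.exp (b - a)) := by
        rw [mul_sub, ← Real.exp_add]; ring_nf
    _ ≤ Real.exp a * (a - b) := by
        refine mul_le_mul_of_nonneg_left ?_ (Real.exp_pos a).le
        linarith [Real.add_one_le_exp (b - a)]
    _ ≤ Real.exp B * (a - b) :=
        mul_le_mul_of_nonneg_right (Real.exp_le_exp.2 ha) (sub_nonneg.2 hab)

/-- The residual `E = y exp (-w) - 1` is bounded in terms of a bound on `|w|`. -/
lemma abs_residual_le {w B : ℝ} (y : ℕ) (hw : |w| ≤ B) :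
    |(y : ℝ) * Real.exp (-w) - 1| ≤ (y : ℝ) * Real.exp B + 1 := by
  have h1 : (y : ℝ) * Real.exp (-w) ≤ (y : ℝ) * Real.exp B := by
    gcongr
    exact (neg_le_abs w).trans hw
  have h2 : 0 ≤ (y : ℝ) * Real.exp (-w) := by positivity
  rw [abs_le]
  constructor <;> linarith

lemma abs_glarmaW_le {β₀ K γ : ℝ} (hγ : |γ| ≤ K) (Y : ℕ → ℕ) :
    ∀ t, |glarmaW β₀ γ Y t| ≤ glarmaBound β₀ K Y t
  | 0 => le_rfl
  | 1 => le_rfl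
  | t + 2 => by
    have hE := abs_residual_le (Y (t + 1)) (abs_glarmaW_le (β₀ := β₀) hγ Y (t + 1))
    simp only [glarmaW, glarmaBound]
    refine (abs_add_le _ _).trans ?_
    rw [abs_mul]
    have hK : 0 ≤ K := (abs_nonneg γ).trans hγ
    gcongr

lemma abs_glarmaW_sub_le {β₀ K γ₁ γ₂ : ℝ} (h₁ : |γ₁| ≤ K) (h₂ : |γ₂| ≤ K) (Y : ℕ → ℕ) :
    ∀ t, |glarmaW β₀ γ₁ Y t - glarmaW β₀ γ₂ Y t| ≤ |γ₁ - γ₂| * glarmaLip β₀ K Y t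
  | 0 => by simp [glarmaW, glarmaLip]
  | 1 => by simp [glarmaW, glarmaLip]
  | t + 2 => by
    have ih := abs_glarmaW_sub_le (β₀ := β₀) h₁ h₂ Y (t + 1)
    have hB₁ := abs_glarmaW_le (β₀ := β₀) h₁ Y (t + 1)
    have hB₂ := abs_glarmaW_le (β₀ := β₀) h₂ Y (t + 1)
    have hE := abs_residual_le (Y (t + 1)) hB₁
    simp only [glarmaW, glarmaLip]
    set w₁ := glarmaW β₀ γ₁ Y (t + 1)
    set w₂ := glarmaW β₀ γ₂ Y (t + 1)
    set B := glarmaBound β₀ K Y (t + 1)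
    set F := glarmaLip β₀ K Y (t + 1)
    have hK : 0 ≤ K := (abs_nonneg γ₁).trans h₁
    have hexp : |Real.exp (-w₁) - Real.exp (-w₂)| ≤ Real.exp B * (|γ₁ - γ₂| * F) := by
      refine (abs_exp_sub_exp_le ((neg_le_abs w₁).trans hB₁) ((neg_le_abs w₂).trans hB₂)).trans ?_
      rw [neg_sub_neg, abs_sub_comm]
      gcongr
    calc _ = |(γ₁ - γ₂) * ((Y (t + 1) : ℝ) * Real.exp (-w₁) - 1) +
            γ₂ * ((Y (t + 1) : ℝ) * (Real.exp (-w₁) - Real.exp (-w₂)))| := by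
          congr 1; ring
      _ ≤ |γ₁ - γ₂| * |(Y (t + 1) : ℝ) * Real.exp (-w₁) - 1| +
            |γ₂| * ((Y (t + 1) : ℝ) * |Real.exp (-w₁) - Real.exp (-w₂)|) := by
          refine (abs_add_le _ _).trans_eq ?_
          rw [abs_mul, abs_mul γ₂, abs_mul (Y (t + 1) : ℝ), Nat.abs_cast]
      _ ≤ |γ₁ - γ₂| * ((Y (t + 1) : ℝ) * Real.exp B + 1) +
            K * ((Y (t + 1) : ℝ) * (Real.exp B * (|γ₁ - γ₂| * F))) := by
          gcongr
      _ = _ := by ring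

lemma glarmaLip_nonneg {β₀ K : ℝ} (hK : 0 ≤ K) (Y : ℕ → ℕ) : ∀ t, 0 ≤ glarmaLip β₀ K Y t
  | 0 => le_rfl
  | 1 => le_rfl
  | t + 2 => by
    have ih := glarmaLip_nonneg (β₀ := β₀) hK Y (t + 1)
    simp only [glarmaLip]
    positivity

/-- for every `δ > 0` and every `t ≥ 2` there is a measurable function `F`
(depending only on `δ`, `β₀*`, `Γ` and `t`, and on the observations only through
`Y_{t-1}, …, Y_1`) such that for all `γ₁, γ₂ ∈ Γ` with `|γ₁ - γ₂| ≤ δ`,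
`|W_t(β₀*, γ₁) - W_t(β₀*, γ₂)| ≤ δ · F(Y_{t-1}, …, Y_1)` pointwise. -/
theorem glarma_W_increment_bound
    (β₀ : ℝ) (Γ : Set ℝ) (hΓcompact : IsCompact Γ) (hΓzero : 0 ∉ Γ)
    (δ : ℝ) (hδ : 0 < δ) (t : ℕ) (ht : 2 ≤ t) :
    ∃ F : (ℕ → ℕ) → ℝ, Measurable F ∧
      (∀ Y Y' : ℕ → ℕ, (∀ s, 1 ≤ s → s ≤ t - 1 → Y s = Y' s) → F Y = F Y') ∧
      ∀ (Y : ℕ → ℕ) (γ₁ γ₂ : ℝ), γ₁ ∈ Γ → γ₂ ∈ Γ → |γ₁ - γ₂| ≤ δ →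
        |glarmaW β₀ γ₁ Y t - glarmaW β₀ γ₂ Y t| ≤ δ * F Y := by
  obtain ⟨K, hK, hΓK⟩ := hΓcompact.isBounded.exists_pos_norm_le
  refine ⟨fun Y => glarmaLip β₀ K Y t, measurable_glarmaLip β₀ K t,
    fun Y Y' h => glarmaLip_congr β₀ K Y Y' t h, fun Y γ₁ γ₂ h₁ h₂ hd => ?_⟩
  exact (abs_glarmaW_sub_le (hΓK γ₁ h₁) (hΓK γ₂ h₂) Y t).trans
    (mul_le_mul_of_nonneg_right hd (glarmaLip_nonneg hK.le Y t))
end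
end
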